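/- Let Σ ⊆ ℝ^{d−1} be open, Λ ⊆ ℝ an open interval, Y = Σ×Λ, and write y = (y₀,y_d) ∈ Y, η = (η₀,η_d) ∈ ℝ^{d−1}×ℝ. Let ρ > 0, δ < 1, m ∈ ℝ, and let ã ∈ S^m_{ρ,δ,δ}(Y×Y×ℝ^d) satisfy, for some ε > 0, ã(y,y',η) = 0 whenever |η_d| ≥ (1−ε)|η|. Define ã^♮(y₀,y₀',η₀; y_d,y_d') = (2π)^{−1} ∫_{−∞}^{∞} ã(y₀,y_d, y₀',y_d', η₀,η_d) e^{i(y_d−y_d')η_d} dη_d. Then: (i) the integrand vanishes for |η_d| ≥ c(ε)|η₀|, so the integral is over a compact interval; (ii) for each (y_d,y_d') ∈ Λ×Λ, the function ã^♮(·,·,·; y_d,y_d') belongs to S^{m+1}_{ρ,δ,δ}(Σ×Σ×ℝ^{d−1}), with seminorms bounded uniformly for (y_d,y_d') in compact subsets of Λ×Λ; (iii) every derivative ∂_{η₀}^α ∂_{y₀}^β ∂_{y₀'}^{β'} ã^♮ is continuous in (y_d,y_d'), uniformly for y₀, y₀' in compact subsets of Σ and |η₀| ≤ R₀, for any R₀ >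 0; (iv) for all u, v ∈ C_0^∞(Y), denoting by Ã the PDO on Y with amplitude ã and by Ã^♮(y_d,y_d') the PDO on Σ with amplitude ã^♮(·,·,·;y_d,y_d'), one has (Ãu, v)_{L²(Y)} = ∫_Λ ∫_Λ ( Ã^♮(y_d,y_d') u(·,y_d'), v(·,y_d) )_{L²(Σ)} dy_d dy_d'. -/

import Mathlib

open MeasureTheory Filter Topology

noncomputable section

/-- Dot product on `ℝ^d`. -/
def dotp {d : ℕ} (x ξ : Fin d → ℝ) : ℝ := ∑ i, x i * ξ i

/-- Directional derivative of a function between normed spaces. -/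
def dirDeriv {E F : Type*} [NormedAddCommGroup E] [NormedSpace ℝ E]
    [NormedAddCommGroup F] [NormedSpace ℝ F] (v : E) (f : E → F) : E → F :=
  fun x => fderiv ℝ f x v

/-- Iterated directional derivatives along a list of directions. -/
def dirDerivList {E F : Type*} [NormedAddCommGroup E] [NormedSpace ℝ E]
    [NormedAddCommGroup F] [NormedSpace ℝ F] : List E → (E → F) → E → F
  | [], f => f
  | v :: l, f => dirDeriv v (dirDerivList l f)

/-- Multi-index partial derivative `∂^α` with respect to a family of directions. -/
def mpderivB {n : ℕ} {E F : Type*} [NormedAddCommGroup E] [NormedSpace ℝ E]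
    [NormedAddCommGroup F] [NormedSpace ℝ F] (b : Fin n → E) (α : Fin n → ℕ)
    (f : E → F) : E → F :=
  dirDerivList ((List.finRange n).flatMap fun i => List.replicate (α i) (b i)) f

/-- Multi-index partial derivative `∂^α` on `ℝ^d`. -/
def mpderiv {d : ℕ} {F : Type*} [NormedAddCommGroup F] [NormedSpace ℝ F]
    (α : Fin d → ℕ) (f : (Fin d → ℝ) → F) : (Fin d → ℝ) → F :=
  mpderivB (fun i => Pi.single i 1) α f

/-- Order `|α|` of a multi-index. -/
def mOrder {d : ℕ} (α : Fin d → ℕ) : ℕ := ∑ i, α i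

/-- Factorial `α!` of a multi-index. -/
def mFactorial {d : ℕ} (α : Fin d → ℕ) : ℕ := ∏ i, (α i).factorial

/-- Power `ζ^α`. -/
def mpow {d : ℕ} (ζ : Fin d → ℝ) (α : Fin d → ℕ) : ℝ := ∏ i, ζ i ^ α i

/-- The finset of multi-indices of order `< N`. -/
def mIdxLt (d N : ℕ) : Finset (Fin d → ℕ) :=
  (Fintype.piFinset fun _ : Fin d => Finset.range N).filter fun α => mOrder α < N

/-- The finset of multi-indices of order `= N`. -/
def mIdxEq (d N : ℕ) : Finset (Fin d → ℕ) :=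
  (Fintype.piFinset fun _ : Fin d => Finset.range (N + 1)).filter fun α => mOrder α = N

/-- Hörmander symbol class `S^m_{ρ,δ}(X × ℝ^d)`. -/
def IsSymbol {d : ℕ} (X : Set (Fin d → ℝ)) (m ρ δ : ℝ)
    (a : (Fin d → ℝ) → (Fin d → ℝ) → ℂ) : Prop :=
  ContDiffOn ℝ (⊤ : ℕ∞) (fun q : (Fin d → ℝ) × (Fin d → ℝ) => a q.1 q.2) (X ×ˢ Set.univ) ∧
  ∀ (α β : Fin d → ℕ) (K : Set (Fin d → ℝ)), IsCompact K → K ⊆ X →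
    ∃ C : ℝ, ∀ x ∈ K, ∀ ξ : Fin d → ℝ,
      ‖mpderiv β (fun y => mpderiv α (fun η => a y η) ξ) x‖ ≤
        C * (1 + ‖ξ‖) ^ (m - ρ * (mOrder α : ℝ) + δ * (mOrder β : ℝ))

/-- Hörmander amplitude class `S^m_{ρ,δ,δ}(X × X × ℝ^d)`. -/
def IsAmplitude {d : ℕ} (X : Set (Fin d → ℝ)) (m ρ δ : ℝ)
    (a : (Fin d → ℝ) → (Fin d → ℝ) → (Fin d → ℝ) → ℂ) : Prop :=
  ContDiffOn ℝ (⊤ : ℕ∞)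
    (fun q : ((Fin d → ℝ) × (Fin d → ℝ)) × (Fin d → ℝ) => a q.1.1 q.1.2 q.2)
    ((X ×ˢ X) ×ˢ Set.univ) ∧
  ∀ (α β β' : Fin d → ℕ) (K : Set (Fin d → ℝ)), IsCompact K → K ⊆ X →
    ∃ C : ℝ, ∀ x ∈ K, ∀ x' ∈ K, ∀ ξ : Fin d → ℝ,
      ‖mpderiv β (fun y => mpderiv β' (fun y' => mpderiv α (fun η => a y y' η) ξ) x') x‖ ≤
        C * (1 + ‖ξ‖) ^ (m - ρ * (mOrder α : ℝ) + δ * ((mOrder β : ℝ) + (mOrder β' : ℝ)))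

/-- `C₀^∞(X)` test functions. -/
def IsTestFun {d : ℕ} (X : Set (Fin d → ℝ)) (u : (Fin d → ℝ) → ℂ) : Prop :=
  ContDiff ℝ (⊤ : ℕ∞) u ∧ HasCompactSupport u ∧ tsupport u ⊆ X

/-- Fourier transform `(2π)^{-d/2} ∫ e^{-i⟨x,ξ⟩} u(x) dx`. -/
def fourierHat {d : ℕ} (u : (Fin d → ℝ) → ℂ) (ξ : Fin d → ℝ) : ℂ :=
  (((2 * Real.pi) ^ (-(d : ℝ) / 2) : ℝ) : ℂ) *
    ∫ x : Fin d → ℝ, Complex.exp (-(Complex.I * (dotp x ξ : ℂ))) * u x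

/-- Pseudo-differential operator with symbol `a`. -/
def Op {d : ℕ} (a : (Fin d → ℝ) → (Fin d → ℝ) → ℂ) (u : (Fin d → ℝ) → ℂ) :
    (Fin d → ℝ) → ℂ := fun x =>
  (((2 * Real.pi) ^ (-(d : ℝ) / 2) : ℝ) : ℂ) *
    ∫ ξ : Fin d → ℝ, Complex.exp (Complex.I * (dotp x ξ : ℂ)) * a x ξ * fourierHat u ξ

/-- Pseudo-differential operator with amplitude `a` (iterated integral). -/
def OpAmp {d : ℕ} (a : (Fin d → ℝ) → (Fin d → ℝ) → (Fin d → ℝ) → ℂ)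
    (u : (Fin d → ℝ) → ℂ) : (Fin d → ℝ) → ℂ := fun x =>
  (((2 * Real.pi) ^ (-(d : ℝ)) : ℝ) : ℂ) *
    ∫ ξ : Fin d → ℝ, ∫ x' : Fin d → ℝ,
      Complex.exp (Complex.I * (dotp (x - x') ξ : ℂ)) * a x x' ξ * u x'

/-- The formal adjoint `A*` of the PDO with symbol `a`. -/
def OpAdj {d : ℕ} (a : (Fin d → ℝ) → (Fin d → ℝ) → ℂ) (u : (Fin d → ℝ) → ℂ) :
    (Fin d → ℝ) → ℂ := fun x =>
  (((2 * Real.pi) ^ (-(d : ℝ)) : ℝ) : ℂ) *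
    ∫ ξ : Fin d → ℝ, ∫ x' : Fin d → ℝ,
      Complex.exp (Complex.I * (dotp (x - x') ξ : ℂ)) * (starRingEnd ℂ) (a x' ξ) * u x'

/-- Gradient of a real-valued function on `ℝ^d`. -/
def gradR {d : ℕ} (f : (Fin d → ℝ) → ℝ) (x : Fin d → ℝ) : Fin d → ℝ :=
  fun i => fderiv ℝ f x (Pi.single i 1)

end
/-- The standard basis of `ℝ^k × ℝ` (coordinates `(y₀, y_d)`). -/
noncomputable def basisP (k : ℕ) : Fin (k + 1) → (Fin k → ℝ) × ℝ :=
  Fin.lastCases ((0 : Fin k → ℝ), (1 : ℝ)) (fun j => (Pi.single j 1, (0 : ℝ)))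

/-- The Euclidean norm of `η = (η₀, η_d) ∈ ℝ^k × ℝ`. -/
noncomputable def eNormP {k : ℕ} (η : (Fin k → ℝ) × ℝ) : ℝ :=
  Real.sqrt ((∑ i, η.1 i ^ 2) + η.2 ^ 2)

/-- The dot product on `ℝ^k × ℝ`. -/
def dotP {k : ℕ} (w w' : (Fin k → ℝ) × ℝ) : ℝ := dotp w.1 w'.1 + w.2 * w'.2

/-- Hörmander amplitude class `S^m_{ρ,δ,δ}(Y × Y × ℝ^{k+1})` in the split coordinates
`y = (y₀, y_d) ∈ ℝ^k × ℝ`. -/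
def IsAmplitudeP {k : ℕ} (Y : Set ((Fin k → ℝ) × ℝ)) (m ρ δ : ℝ)
    (a : ((Fin k → ℝ) × ℝ) → ((Fin k → ℝ) × ℝ) → ((Fin k → ℝ) × ℝ) → ℂ) : Prop :=
  ContDiffOn ℝ (⊤ : ℕ∞)
    (fun q : (((Fin k → ℝ) × ℝ) × ((Fin k → ℝ) × ℝ)) × ((Fin k → ℝ) × ℝ) =>
      a q.1.1 q.1.2 q.2) ((Y ×ˢ Y) ×ˢ Set.univ) ∧
  ∀ (α β β' : Fin (k + 1) → ℕ) (K : Set ((Fin k → ℝ) × ℝ)), IsCompact K → K ⊆ Y →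
    ∃ C : ℝ, ∀ y ∈ K, ∀ y' ∈ K, ∀ η : (Fin k → ℝ) × ℝ,
      ‖mpderivB (basisP k) β (fun w => mpderivB (basisP k) β'
          (fun w' => mpderivB (basisP k) α (fun e => a w w' e) η) y') y‖ ≤
        C * (1 + eNormP η) ^ (m - ρ * (mOrder α : ℝ) + δ * ((mOrder β : ℝ) + (mOrder β' : ℝ)))

/-- PDO with amplitude `a` on an open subset of `ℝ^k × ℝ` (iterated integral). -/
noncomputable def OpAmpP {k : ℕ}
    (a : ((Fin k → ℝ) × ℝ) → ((Fin k → ℝ) × ℝ) → ((Fin k → ℝ) × ℝ) → ℂ)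
    (u : ((Fin k → ℝ) × ℝ) → ℂ) : ((Fin k → ℝ) × ℝ) → ℂ := fun w =>
  (((2 * Real.pi) ^ (-((k : ℝ) + 1)) : ℝ) : ℂ) *
    ∫ η : (Fin k → ℝ) × ℝ, ∫ w' : (Fin k → ℝ) × ℝ,
      Complex.exp (Complex.I * (dotP (w - w') η : ℂ)) * a w w' η * u w'

/-!
On the support of `ã` one has `|η_d| ≤ c |η₀|` with `c = c(ε)`, so `1 + |η|` is comparable to
`1 + |η₀|` there. Differentiating under the integral sign, each derivative of `ã^♮` is an integral
over an interval of length `O(1 + |η₀|)` of a function obeying the symbol bounds of `ã`, whence the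
order `m + 1`; the fixed compact range of `η_d` for bounded `η₀` gives joint smoothness in all
variables, hence the continuity in `(y_d, y_d')`.

For the kernel formula, the integral over `η` has to be exchanged with the others although it only
converges as an iterated integral. Integrating by parts in `y₀'` alone gains any power of
`(1 + |η₀|)^(1 - δ)`, and on the cone decay in `η₀` is decay in `η`. So after the `y₀'`-integration
the integrand is dominated by an integrable function of `η`, and Fubini's theorem applies.
-/

section IteratedDirectionalDerivatives

variable {E E' F : Type*} [NormedAddCommGroup E] [NormedSpace ℝ E] [NormedAddCommGroup E']
  [NormedSpace ℝ E'] [NormedAddCommGroup F] [NormedSpace ℝ F]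

theorem dirDerivList_append (l₁ l₂ : List E) (f : E → F) :
    dirDerivList (l₁ ++ l₂) f = dirDerivList l₁ (dirDerivList l₂ f) := by
  induction l₁ with
  | nil => rfl
  | cons v l ih => simp only [List.cons_append, dirDerivList, ih]

theorem dirDerivList_replicate_succ (n : ℕ) (v : E) (f : E → F) :
    dirDerivList (List.replicate (n + 1) v) f =
      dirDerivList (List.replicate n v) (dirDeriv v f) := by
  rw [List.replicate_succ', dirDerivList_append]
  rfl

theorem dirDerivList_eventuallyEq (l : List E) {f g : E → F} {x : E} (h : f =ᶠ[𝓝 x] g) :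
    dirDerivList l f =ᶠ[𝓝 x] dirDerivList l g := by
  induction l with
  | nil => exact h
  | cons v l ih => exact ih.fderiv.fun_comp (· v)

theorem dirDerivList_eqOn (l : List E) {f g : E → F} {U : Set E} (hU : IsOpen U)
    (h : Set.EqOn f g U) : Set.EqOn (dirDerivList l f) (dirDerivList l g) U := fun _ hx =>
  (dirDerivList_eventuallyEq l (h.eventuallyEq_of_mem (hU.mem_nhds hx))).eq_of_nhds

theorem dirDerivList_zero (l : List E) : dirDerivList l (0 : E → F) = 0 := by
  induction l with
  | nil => rfl
  | cons v l ih =>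
    funext x
    simp [dirDerivList, dirDeriv, ih]

theorem dirDerivList_eventuallyEq_zero (l : List E) {f : E → F} {x : E} (h : f =ᶠ[𝓝 x] 0) :
    dirDerivList l f =ᶠ[𝓝 x] 0 := by
  simpa only [dirDerivList_zero] using dirDerivList_eventuallyEq l h

theorem support_dirDerivList_subset (l : List E) (f : E → F) :
    Function.support (dirDerivList l f) ⊆ tsupport f := by
  intro x hx
  contrapose! hx
  rw [notMem_tsupport_iff_eventuallyEq] at hx
  exact Function.notMem_support.2 (dirDerivList_eventuallyEq_zero l hx).eq_of_nhds

theorem contDiffOn_dirDeriv (v : E) {f : E → F} {U : Set E} (hU : IsOpen U)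
    (hf : ContDiffOn ℝ (⊤ : ℕ∞) f U) : ContDiffOn ℝ (⊤ : ℕ∞) (dirDeriv v f) U :=
  (hf.fderiv_of_isOpen (m := (⊤ : ℕ∞)) hU (by simp)).clm_apply contDiffOn_const

theorem contDiffOn_dirDerivList (l : List E) {f : E → F} {U : Set E} (hU : IsOpen U)
    (hf : ContDiffOn ℝ (⊤ : ℕ∞) f U) : ContDiffOn ℝ (⊤ : ℕ∞) (dirDerivList l f) U := by
  induction l with
  | nil => exact hf
  | cons v l ih => exact contDiffOn_dirDeriv v hU ih

theorem contDiff_dirDerivList (l : List E) {f : E → F} (hf : ContDiff ℝ (⊤ : ℕ∞) f) :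
    ContDiff ℝ (⊤ : ℕ∞) (dirDerivList l f) :=
  contDiffOn_univ.1 (contDiffOn_dirDerivList l isOpen_univ hf.contDiffOn)

theorem differentiableAt_dirDerivList (l : List E) {f : E → F} {U : Set E} (hU : IsOpen U)
    (hf : ContDiffOn ℝ (⊤ : ℕ∞) f U) {x : E} (hx : x ∈ U) :
    DifferentiableAt ℝ (dirDerivList l f) x :=
  ((contDiffOn_dirDerivList l hU hf).contDiffAt (hU.mem_nhds hx)).differentiableAt (by simp)

theorem dirDerivList_comp {L : E →L[ℝ] E'} {φ : E → E'} (hφ : ∀ x, HasFDerivAt φ L x)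
    (l : List E) {f : E' → F} {U : Set E'} (hU : IsOpen U) (hf : ContDiffOn ℝ (⊤ : ℕ∞) f U) :
    Set.EqOn (dirDerivList l fun x => f (φ x)) (fun x => dirDerivList (l.map L) f (φ x))
      (φ ⁻¹' U) := by
  have hφc : Continuous φ := continuous_iff_continuousAt.2 fun x => (hφ x).continuousAt
  induction l with
  | nil => exact fun _ _ => rfl
  | cons v l ih =>
    intro x hx
    have hloc := ih.eventuallyEq_of_mem ((hU.preimage hφc).mem_nhds hx)
    have hd := (differentiableAt_dirDerivList (l.map L) hU hf hx).hasFDerivAt.comp x (hφ x)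
    simp only [dirDerivList, dirDeriv, List.map_cons]
    rw [hloc.fderiv_eq]
    exact congrArg (· v) hd.fderiv

theorem dirDerivList_add (l : List E) {f g : E → F} {U : Set E} (hU : IsOpen U)
    (hf : ContDiffOn ℝ (⊤ : ℕ∞) f U) (hg : ContDiffOn ℝ (⊤ : ℕ∞) g U) :
    Set.EqOn (dirDerivList l fun x => f x + g x)
      (fun x => dirDerivList l f x + dirDerivList l g x) U := by
  induction l with
  | nil => exact fun _ _ => rfl
  | cons v l ih =>
    intro x hx
    simp only [dirDerivList, dirDeriv]
    rw [(ih.eventuallyEq_of_mem (hU.mem_nhds hx)).fderiv_eq,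
      fderiv_fun_add (differentiableAt_dirDerivList l hU hf hx)
        (differentiableAt_dirDerivList l hU hg hx)]
    rfl

theorem dirDerivList_mul_const (l : List E) {f : E → ℂ} {U : Set E} (hU : IsOpen U)
    (hf : ContDiffOn ℝ (⊤ : ℕ∞) f U) (c : ℂ) :
    Set.EqOn (dirDerivList l fun x => f x * c) (fun x => dirDerivList l f x * c) U := by
  induction l with
  | nil => exact fun _ _ => rfl
  | cons v l ih =>
    intro x hx
    simp only [dirDerivList, dirDeriv]
    rw [(ih.eventuallyEq_of_mem (hU.mem_nhds hx)).fderiv_eq,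
      fderiv_mul_const (differentiableAt_dirDerivList l hU hf hx)]
    exact mul_comm _ _

theorem dirDeriv_mul {f g : E → ℂ} {x : E} (v : E) (hf : DifferentiableAt ℝ f x)
    (hg : DifferentiableAt ℝ g x) :
    dirDeriv v (fun x => f x * g x) x = f x * dirDeriv v g x + dirDeriv v f x * g x := by
  simp only [dirDeriv]
  rw [fderiv_fun_mul hf hg]
  simp [mul_comm]

/- Applying the product rule to one factor at a time avoids binomial coefficients, at the price of
the constant `2 ^ n`. -/
theorem norm_dirDerivList_replicate_mul_le (n : ℕ) (v : E) {U : Set E} (hU : IsOpen U) {A B : ℝ}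
    (hA : 0 ≤ A) {x : E} (hx : x ∈ U) {f g : E → ℂ} (hf : ContDiffOn ℝ (⊤ : ℕ∞) f U)
    (hg : ContDiffOn ℝ (⊤ : ℕ∞) g U) (hfA : ∀ i ≤ n, ‖dirDerivList (List.replicate i v) f x‖ ≤ A)
    (hgB : ∀ i ≤ n, ‖dirDerivList (List.replicate i v) g x‖ ≤ B) :
    ‖dirDerivList (List.replicate n v) (fun x => f x * g x) x‖ ≤ 2 ^ n * (A * B) := by
  induction n generalizing f g with
  | zero =>
    simpa [dirDerivList] using mul_le_mul (hfA 0 le_rfl) (hgB 0 le_rfl) (norm_nonneg _) hA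
  | succ n ih =>
    have hd : ∀ {h : E → ℂ}, ContDiffOn ℝ (⊤ : ℕ∞) h U → ∀ y ∈ U, DifferentiableAt ℝ h y :=
      fun hh _ => differentiableAt_dirDerivList [] hU hh
    have hDf := contDiffOn_dirDeriv v hU hf
    have hDg := contDiffOn_dirDeriv v hU hg
    have hprod : Set.EqOn (dirDeriv v fun x => f x * g x)
        (fun y => f y * dirDeriv v g y + dirDeriv v f y * g y) U :=
      fun y hy => dirDeriv_mul v (hd hf y hy) (hd hg y hy)
    have hright : ‖dirDerivList (List.replicate n v) (fun x => f x * dirDeriv v g x) x‖ ≤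
        2 ^ n * (A * B) := ih hf hDg (fun i hi => hfA i (by omega)) fun i hi => by
      simpa only [dirDerivList_replicate_succ] using hgB (i + 1) (by omega)
    have hleft : ‖dirDerivList (List.replicate n v) (fun x => dirDeriv v f x * g x) x‖ ≤
        2 ^ n * (A * B) := ih hDf hg (fun i hi => by
      simpa only [dirDerivList_replicate_succ] using hfA (i + 1) (by omega))
        fun i hi => hgB i (by omega)
    rw [dirDerivList_replicate_succ, dirDerivList_eqOn _ hU hprod hx,
      dirDerivList_add _ hU (hf.mul hDg) (hDf.mul hg) hx]
    refine (norm_add_le _ _).trans ?_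
    rw [pow_succ]
    linarith

end IteratedDirectionalDerivatives

section ParametricIntegrals

variable {X T F : Type*}

/-- The fibres `g (x, ·)`, `x ∈ U`, have compact support, locally uniformly in `x`. This is what
makes fibre integrals `∫ t, g (x, t)` of smooth functions smooth. -/
def HasCompactFibreSupport [TopologicalSpace X] [TopologicalSpace T] [Zero F] (g : X × T → F)
    (U : Set X) : Prop :=
  ∀ x ∈ U, ∃ K : Set T, IsCompact K ∧ ∀ᶠ x' in 𝓝 x, ∀ t ∉ K, g (x', t) = 0

theorem eventuallyEq_zero_of_fibres [TopologicalSpace X] [TopologicalSpace T] [Zero F]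
    {g : X × T → F} {K : Set T} (hK : IsClosed K) {x : X}
    (hzero : ∀ᶠ x' in 𝓝 x, ∀ t ∉ K, g (x', t) = 0) {t : T} (ht : t ∉ K) :
    g =ᶠ[𝓝 (x, t)] 0 := by
  rw [nhds_prod_eq]
  filter_upwards [hzero.prod_mk (hK.isOpen_compl.mem_nhds ht)] with q hq
  exact hq.1 _ hq.2

theorem hasCompactFibreSupport_of_norm_le [TopologicalSpace X] [NormedAddCommGroup T]
    [ProperSpace T] [Zero F] {g : X × T → F} {r : X → ℝ} (hr : Continuous r)
    (hg : ∀ x t, r x < ‖t‖ → g (x, t) = 0) (U : Set X) : HasCompactFibreSupport g U := by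
  refine fun x _ => ⟨Metric.closedBall 0 (r x + 1), isCompact_closedBall _ _, ?_⟩
  filter_upwards [hr.continuousAt.eventually_lt_const (lt_add_one (r x))] with x' hx' t ht
  exact hg x' t (hx'.trans (by simpa using ht))

namespace HasCompactFibreSupport

theorem mul_right [TopologicalSpace X] [TopologicalSpace T] {g : X × T → ℂ} {U : Set X}
    (hsupp : HasCompactFibreSupport g U) (h : X × T → ℂ) :
    HasCompactFibreSupport (fun q => g q * h q) U := fun x hx =>
  let ⟨K, hK, hzero⟩ := hsupp x hx
  ⟨K, hK, hzero.mono fun x' h' t ht => by simp only [h' t ht, zero_mul]⟩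

variable [NormedAddCommGroup X] [NormedSpace ℝ X] [NormedAddCommGroup T] [NormedSpace ℝ T]
  [NormedAddCommGroup F] [NormedSpace ℝ F]

theorem iterated_dirDeriv {g : X × T → F} {U : Set X} (hsupp : HasCompactFibreSupport g U)
    (l : List (X × T)) : HasCompactFibreSupport (dirDerivList l g) U := by
  intro x hx
  obtain ⟨K, hK, hzero⟩ := hsupp x hx
  refine ⟨K, hK, hzero.eventually_nhds.mono fun x' hx' t ht => ?_⟩
  exact (dirDerivList_eventuallyEq_zero l
    (eventuallyEq_zero_of_fibres hK.isClosed hx' ht)).eq_of_nhds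

variable [MeasurableSpace T] [BorelSpace T] {μ : Measure T} [IsLocallyFiniteMeasure μ]
  [μ.IsNegInvariant]

/- The integral is the value at `(x, 0)` of the convolution of `g` with the constant `1`. -/
theorem contDiffOn_integral {g : X × T → F} {U : Set X} (hsupp : HasCompactFibreSupport g U)
    (hU : IsOpen U) (hg : ContDiffOn ℝ (⊤ : ℕ∞) g (U ×ˢ Set.univ)) :
    ContDiffOn ℝ (⊤ : ℕ∞) (fun x => ∫ t, g (x, t) ∂μ) U := by
  intro x hx
  obtain ⟨K, hK, hzero⟩ := hsupp x hx
  obtain ⟨V, hV, hVo, hxV⟩ := eventually_nhds_iff.1 hzero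
  have hconv := contDiffOn_convolution_right_with_param (f := fun _ => (1 : ℝ)) (n := ⊤) (μ := μ)
    (ContinuousLinearMap.lsmul ℝ ℝ) (g := fun x t => g (x, t)) (hU.inter hVo) hK
    (fun p t hp ht => hV p hp.2 t ht) (locallyIntegrable_const _)
    (hg.mono (Set.prod_mono Set.inter_subset_left subset_rfl))
  have hcomp := (hconv.contDiffAt (x := (x, 0))
    (((hU.inter hVo).prod isOpen_univ).mem_nhds ⟨⟨hx, hxV⟩, trivial⟩)).comp x
      (contDiffAt_id.prodMk contDiffAt_const)
  refine (hcomp.congr_of_eventuallyEq (.of_forall fun y => ?_)).contDiffWithinAt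
  simpa [convolution] using (integral_neg_eq_self (fun t => g (y, t)) μ).symm

theorem dirDeriv_integral {g : X × T → F} {U : Set X} (hsupp : HasCompactFibreSupport g U)
    (hU : IsOpen U) (hg : ContDiffOn ℝ (⊤ : ℕ∞) g (U ×ˢ Set.univ)) (v : X) :
    Set.EqOn (dirDeriv v fun x => ∫ t, g (x, t) ∂μ) (fun x => ∫ t, dirDeriv (v, 0) g (x, t) ∂μ)
      U := by
  intro x hx
  obtain ⟨K, hK, hzero⟩ := hsupp x hx
  obtain ⟨V, hV, hVo, hxV⟩ := eventually_nhds_iff.1 hzero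
  have hUo : IsOpen (U ×ˢ (Set.univ : Set T)) := hU.prod isOpen_univ
  have hconv := hasFDerivAt_convolution_right_with_param (f := fun _ => (1 : ℝ)) (μ := μ)
    (ContinuousLinearMap.lsmul ℝ ℝ) (g := fun x t => g (x, t)) (hU.inter hVo) hK
    (fun p t hp ht => hV p hp.2 t ht) (locallyIntegrable_const _)
    ((hg.mono (Set.prod_mono Set.inter_subset_left subset_rfl)).of_le (by simp)) (x, 0) ⟨hx, hxV⟩
  have hfderiv : HasFDerivAt (fun y => ∫ t, g (y, t) ∂μ)
      ((∫ t, fderiv ℝ g (x, t) ∂μ).comp (ContinuousLinearMap.inl ℝ X T)) x := by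
    convert hconv.comp (f := fun y => (y, 0)) x (hasFDerivAt_prodMk_left x (0 : T)) using 1
    · funext y
      simpa [convolution] using (integral_neg_eq_self (fun t => g (y, t)) μ).symm
    · have hone : ContinuousLinearMap.lsmul ℝ ℝ (1 : ℝ) = ContinuousLinearMap.id ℝ F := by
        ext
        simp
      simpa [convolution, Function.HasUncurry.uncurry, ContinuousLinearMap.precompR, hone] using
        congrArg (·.comp (ContinuousLinearMap.inl ℝ X T))
          (integral_neg_eq_self (fun t => fderiv ℝ g (x, t)) μ).symm
  have hcont : Continuous fun t => fderiv ℝ g (x, t) :=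
    (hg.continuousOn_fderiv_of_isOpen hUo (by simp)).comp_continuous (by fun_prop)
      fun t => ⟨hx, trivial⟩
  have hcompact : HasCompactSupport fun t => fderiv ℝ g (x, t) := by
    refine .intro hK fun t ht => ?_
    rw [(eventuallyEq_zero_of_fibres hK.isClosed hzero ht).fderiv_eq, fderiv_zero]
    rfl
  simp only [dirDeriv]
  rw [hfderiv.fderiv]
  exact ContinuousLinearMap.integral_apply (hcont.integrable_of_hasCompactSupport hcompact) _

theorem dirDerivList_integral {g : X × T → F} {U : Set X} (hsupp : HasCompactFibreSupport g U)
    (hU : IsOpen U) (hg : ContDiffOn ℝ (⊤ : ℕ∞) g (U ×ˢ Set.univ)) (l : List X) :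
    Set.EqOn (dirDerivList l fun x => ∫ t, g (x, t) ∂μ)
      (fun x => ∫ t, dirDerivList (l.map (·, 0)) g (x, t) ∂μ) U := by
  induction l with
  | nil => exact fun _ _ => rfl
  | cons v l ih =>
    intro x hx
    refine (dirDerivList_eqOn [v] hU ih hx).trans ?_
    exact (hsupp.iterated_dirDeriv _).dirDeriv_integral hU
      (contDiffOn_dirDerivList _ (hU.prod isOpen_univ) hg) v hx

theorem dirDerivList_integral_mul {f : X × T → ℂ} {U : Set X} (hsupp : HasCompactFibreSupport f U)
    (hU : IsOpen U) (hf : ContDiffOn ℝ (⊤ : ℕ∞) f (U ×ˢ Set.univ)) {h : T → ℂ}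
    (hh : ContDiff ℝ (⊤ : ℕ∞) h) (l : List X) :
    Set.EqOn (dirDerivList l fun x => ∫ t, f (x, t) * h t ∂μ)
      (fun x => ∫ t, dirDerivList (l.map (·, 0)) f (x, t) * h t ∂μ) U := by
  have hUo : IsOpen (U ×ˢ (Set.univ : Set T)) := hU.prod isOpen_univ
  have hfh : ContDiffOn ℝ (⊤ : ℕ∞) (fun q : X × T => f q * h q.2) (U ×ˢ Set.univ) :=
    hf.mul (hh.comp contDiff_snd).contDiffOn
  intro x hx
  have hslice : ∀ {g : X × T → ℂ}, ContDiffOn ℝ (⊤ : ℕ∞) g (U ×ˢ Set.univ) → ∀ t,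
      dirDerivList l (fun x => g (x, t)) x = dirDerivList (l.map (·, 0)) g (x, t) := fun hg t =>
    dirDerivList_comp (φ := fun x => (x, t)) (fun x => hasFDerivAt_prodMk_left x t) l hUo hg
      ⟨hx, trivial⟩
  refine ((hsupp.mul_right fun q => h q.2).dirDerivList_integral hU hfh l hx).trans ?_
  refine integral_congr_ae (.of_forall fun t => ?_)
  have hft : ContDiffOn ℝ (⊤ : ℕ∞) (fun x => f (x, t)) U :=
    hf.comp (contDiff_prodMk_left t).contDiffOn fun _ hy => ⟨hy, trivial⟩
  exact (hslice hfh t).symm.trans <| (dirDerivList_mul_const l hU hft (h t) hx).trans <|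
    congrArg (· * h t) (hslice hf t)

end HasCompactFibreSupport

end ParametricIntegrals

section JointDerivatives

variable {A B C F : Type*}

/-- An amplitude `a y y' η` as a function of the single variable `((y, y'), η)`. -/
def uncurry₃ (a : A → B → C → F) : (A × B) × C → F := fun q => a q.1.1 q.1.2 q.2

variable [NormedAddCommGroup A] [NormedSpace ℝ A] [NormedAddCommGroup B] [NormedSpace ℝ B]
  [NormedAddCommGroup C] [NormedSpace ℝ C] [NormedAddCommGroup F] [NormedSpace ℝ F]

/-- The derivative of `a y y' η` along the directions `lc` in `η`, then `lb` in `y'`, then `la` in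
`y`, one variable at a time: the form in which the amplitude classes express derivatives. -/
noncomputable def nestedDirDeriv (la : List A) (lb : List B) (lc : List C) (a : A → B → C → F)
    (y : A) (y' : B) (η : C) : F :=
  dirDerivList la (fun w => dirDerivList lb (fun w' => dirDerivList lc (a w w') η) y') y

/-- The directions `la`, `lb`, `lc` of the three variables as directions of the joint variable
`((y, y'), η)`. -/
def jointDirs (la : List A) (lb : List B) (lc : List C) : List ((A × B) × C) :=
  la.map (fun v => ((v, 0), 0)) ++ (lb.map (fun v => ((0, v), 0)) ++ lc.map (fun v => (0, v)))

theorem nestedDirDeriv_eq_dirDerivList (la : List A) (lb : List B) (lc : List C)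
    {a : A → B → C → F} {U : Set A} {V : Set B} (hU : IsOpen U) (hV : IsOpen V)
    (ha : ContDiffOn ℝ (⊤ : ℕ∞) (uncurry₃ a) ((U ×ˢ V) ×ˢ Set.univ)) {y : A} (hy : y ∈ U) {y' : B}
    (hy' : y' ∈ V) (η : C) :
    nestedDirDeriv la lb lc a y y' η =
      dirDerivList (jointDirs la lb lc) (uncurry₃ a) ((y, y'), η) := by
  have hO : IsOpen ((U ×ˢ V) ×ˢ (Set.univ : Set C)) := (hU.prod hV).prod isOpen_univ
  let ιA := (ContinuousLinearMap.inl ℝ A B).prod (0 : A →L[ℝ] C)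
  let ιB := (ContinuousLinearMap.inr ℝ A B).prod (0 : B →L[ℝ] C)
  let ιC := ContinuousLinearMap.inr ℝ (A × B) C
  have hη : ∀ w ∈ U, ∀ w' ∈ V, dirDerivList lc (a w w') η =
      dirDerivList (lc.map ιC) (uncurry₃ a) ((w, w'), η) := fun w hw w' hw' =>
    dirDerivList_comp (φ := fun e => ((w, w'), e)) (fun e => hasFDerivAt_prodMk_right (w, w') e)
      lc hO ha ⟨⟨hw, hw'⟩, trivial⟩
  have ha₁ := contDiffOn_dirDerivList (lc.map ιC) hO ha
  have hy'η : ∀ w ∈ U, dirDerivList lb (fun w' => dirDerivList lc (a w w') η) y' =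
      dirDerivList (lb.map ιB) (dirDerivList (lc.map ιC) (uncurry₃ a)) ((w, y'), η) := fun w hw =>
    (dirDerivList_eqOn lb hV (hη w hw) hy').trans <|
      dirDerivList_comp (φ := fun w' => ((w, w'), η)) (L := ιB)
        (fun w' => (hasFDerivAt_prodMk_right w w').prodMk (hasFDerivAt_const η w')) lb hO ha₁
        ⟨⟨hw, hy'⟩, trivial⟩
  have ha₂ := contDiffOn_dirDerivList (lb.map ιB) hO ha₁
  rw [jointDirs, dirDerivList_append, dirDerivList_append]
  exact (dirDerivList_eqOn la hU hy'η hy).trans <|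
    dirDerivList_comp (φ := fun w => ((w, y'), η)) (L := ιA)
      (fun w => (hasFDerivAt_prodMk_left w y').prodMk (hasFDerivAt_const η w)) la hO ha₂
      ⟨⟨hy, hy'⟩, trivial⟩

end JointDerivatives

section MultiIndices

variable {n k : ℕ} {E : Type*}

/-- The list of directions in which the multi-index derivative `∂^α` differentiates. -/
def multiIndexDirs (b : Fin n → E) (α : Fin n → ℕ) : List E :=
  (List.finRange n).flatMap fun i => List.replicate (α i) (b i)

/-- The list of directions of `∂^α` with respect to the standard basis. -/
noncomputable def coordDirs (α : Fin n → ℕ) : List (Fin n → ℝ) :=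
  multiIndexDirs (fun i => Pi.single i 1) α

theorem multiIndexDirs_zero (b : Fin n → E) : multiIndexDirs b 0 = [] := by
  simp [multiIndexDirs]

theorem multiIndexDirs_single (b : Fin n → E) (j : Fin n) (N : ℕ) :
    multiIndexDirs b (Pi.single j N) = List.replicate N (b j) := by
  have hlist : ∀ l : List (Fin n), l.Nodup →
      (l.flatMap fun i => List.replicate ((Pi.single j N : Fin n → ℕ) i) (b i)) =
        if j ∈ l then List.replicate N (b j) else [] := by
    intro l hl
    induction l with
    | nil => simp
    | cons i l ih =>
      rw [List.nodup_cons] at hl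
      rw [List.flatMap_cons, ih hl.2]
      rcases eq_or_ne j i with rfl | hij
      · simp [hl.1]
      · simp [hij]
  simpa [multiIndexDirs] using hlist _ (List.nodup_finRange n)

theorem mOrder_zero : mOrder (0 : Fin n → ℕ) = 0 := by
  simp [mOrder]

theorem mOrder_single (j : Fin n) (N : ℕ) : mOrder (Pi.single j N) = N := by
  simp [mOrder]

theorem multiIndexDirs_basisP_snoc_zero (α : Fin k → ℕ) :
    multiIndexDirs (basisP k) (Fin.snoc (α := fun _ => ℕ) α 0) =
      (coordDirs α).map fun v => (v, 0) := by
  unfold coordDirs multiIndexDirs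
  rw [List.finRange_succ_last, List.flatMap_append, List.map_flatMap, List.flatMap_map]
  simp [basisP, Fin.snoc_castSucc (α := fun _ => ℕ), Fin.snoc_last (α := fun _ => ℕ)]

theorem mOrder_snoc_zero (α : Fin k → ℕ) :
    mOrder (Fin.snoc (α := fun _ => ℕ) α 0 : Fin (k + 1) → ℕ) = mOrder α := by
  unfold mOrder
  rw [Fin.sum_univ_castSucc]
  simp [Fin.snoc_castSucc (α := fun _ => ℕ), Fin.snoc_last (α := fun _ => ℕ)]

end MultiIndices

section Cone

variable {k : ℕ}

/-- The space `ℝ^k × ℝ` of split coordinates `(y₀, y_d)`. -/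
abbrev SplitSpace (k : ℕ) := (Fin k → ℝ) × ℝ

/-- The amplitude `a` vanishes for `|η_d| ≥ c |η₀|`, with the Euclidean norm of `η₀`. -/
def VanishesOutsideCone (c : ℝ) (a : SplitSpace k → SplitSpace k → SplitSpace k → ℂ) : Prop :=
  ∀ y y' : SplitSpace k, ∀ η₀ : Fin k → ℝ, ∀ ηd : ℝ,
    c * Real.sqrt (∑ i, η₀ i ^ 2) ≤ |ηd| → a y y' (η₀, ηd) = 0

/- For `ε < 1` the condition `(1 - ε) |η| ≤ |η_d|` reads `|η_d| ≥ c |η₀|` with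
`c = (1 - ε) / √(1 - (1 - ε) ^ 2)`. -/
theorem exists_vanishesOutsideCone {ε : ℝ} (hε : 0 < ε)
    {a : SplitSpace k → SplitSpace k → SplitSpace k → ℂ}
    (ha : ∀ y y' η, (1 - ε) * eNormP η ≤ |η.2| → a y y' η = 0) :
    ∃ c, 0 ≤ c ∧ VanishesOutsideCone c a := by
  rcases le_or_gt 1 ε with hε₁ | hε₁
  · refine ⟨0, le_rfl, fun y y' η₀ ηd _ => ha _ _ _ ?_⟩
    exact (mul_nonpos_of_nonpos_of_nonneg (by linarith) (Real.sqrt_nonneg _)).trans (abs_nonneg _)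
  · have hpos : 0 < 1 - (1 - ε) ^ 2 := by nlinarith
    refine ⟨(1 - ε) / Real.sqrt (1 - (1 - ε) ^ 2),
      div_nonneg (by linarith) (Real.sqrt_nonneg _), fun y y' η₀ ηd h => ha _ _ _ ?_⟩
    have hsum : 0 ≤ ∑ i, η₀ i ^ 2 := Finset.sum_nonneg fun i _ => sq_nonneg _
    rw [div_mul_eq_mul_div, div_le_iff₀ (Real.sqrt_pos.2 hpos)] at h
    have hsq := pow_le_pow_left₀ (mul_nonneg (by linarith) (Real.sqrt_nonneg _)) h 2
    rw [mul_pow, mul_pow, Real.sq_sqrt hsum, Real.sq_sqrt hpos.le, sq_abs] at hsq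
    refine Real.le_sqrt_of_sq_le ?_ |>.trans_eq (Real.sqrt_sq_eq_abs ηd)
    rw [eNormP, mul_pow, Real.sq_sqrt (by positivity)]
    linarith

theorem norm_le_eNormP (η : SplitSpace k) : ‖η‖ ≤ eNormP η := by
  have hsum : 0 ≤ ∑ i, η.1 i ^ 2 := Finset.sum_nonneg fun i _ => sq_nonneg _
  refine norm_prod_le_iff.2 ⟨(pi_norm_le_iff_of_nonneg (Real.sqrt_nonneg _)).2 fun i =>
    Real.abs_le_sqrt ?_, Real.abs_le_sqrt (by linarith)⟩
  have hi := Finset.single_le_sum (f := fun i => η.1 i ^ 2) (fun i _ => sq_nonneg _)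
    (Finset.mem_univ i)
  linarith [sq_nonneg η.2]

theorem sqrt_sum_sq_le (x : Fin k → ℝ) : Real.sqrt (∑ i, x i ^ 2) ≤ k * ‖x‖ := by
  refine Real.sqrt_le_iff.2 ⟨by positivity, ?_⟩
  calc ∑ i, x i ^ 2 ≤ ∑ _i : Fin k, ‖x‖ ^ 2 := Finset.sum_le_sum fun i _ =>
        sq_le_sq' (neg_le_of_abs_le (norm_le_pi_norm x i)) (le_of_abs_le (norm_le_pi_norm x i))
    _ = k * ‖x‖ ^ 2 := by simp
    _ ≤ (k * ‖x‖) ^ 2 := by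
      rw [mul_pow]
      gcongr
      exact_mod_cast Nat.le_self_pow two_ne_zero k

theorem one_add_eNormP_le_of_cone {c : ℝ} (hc : 0 ≤ c) {η : SplitSpace k}
    (hη : |η.2| ≤ c * Real.sqrt (∑ i, η.1 i ^ 2)) :
    1 + eNormP η ≤ (1 + (1 + c) * k) * (1 + ‖η.1‖) := by
  have hsplit : eNormP η ≤ Real.sqrt (∑ i, η.1 i ^ 2) + |η.2| := by
    refine Real.sqrt_le_iff.2 ⟨by positivity, ?_⟩
    rw [add_sq, Real.sq_sqrt (Finset.sum_nonneg fun i _ => sq_nonneg _), sq_abs]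
    have hcross : 0 ≤ 2 * Real.sqrt (∑ i, η.1 i ^ 2) * |η.2| := by positivity
    linarith
  have hcone : eNormP η ≤ (1 + c) * k * ‖η.1‖ := by
    calc eNormP η ≤ (1 + c) * Real.sqrt (∑ i, η.1 i ^ 2) := by linarith
      _ ≤ (1 + c) * (k * ‖η.1‖) := by gcongr; exact sqrt_sum_sq_le _
      _ = (1 + c) * k * ‖η.1‖ := by ring
  have hk : 0 ≤ (1 + c) * k := by positivity
  linarith [norm_nonneg η.1]

theorem rpow_le_rpow_abs_mul_rpow {M x y : ℝ} (hM : 1 ≤ M) (hy : 0 < y) (hyx : y ≤ x)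
    (hxy : x ≤ M * y) (s : ℝ) : x ^ s ≤ M ^ |s| * y ^ s := by
  rcases le_total 0 s with hs | hs
  · rw [abs_of_nonneg hs, ← Real.mul_rpow (by linarith) hy.le]
    exact Real.rpow_le_rpow (by linarith) hxy hs
  · exact (Real.rpow_le_rpow_of_nonpos hy hyx hs).trans
      (le_mul_of_one_le_left (by positivity) (Real.one_le_rpow hM (abs_nonneg s)))

namespace VanishesOutsideCone

variable {c : ℝ} {a : SplitSpace k → SplitSpace k → SplitSpace k → ℂ}

theorem dirDerivList_uncurry₃_eq_zero (ha : VanishesOutsideCone c a)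
    (l : List ((SplitSpace k × SplitSpace k) × SplitSpace k)) {y y' η : SplitSpace k}
    (hη : c * Real.sqrt (∑ i, η.1 i ^ 2) < |η.2|) :
    dirDerivList l (uncurry₃ a) ((y, y'), η) = 0 := by
  have hopen : IsOpen {q : (SplitSpace k × SplitSpace k) × SplitSpace k |
      c * Real.sqrt (∑ i, q.2.1 i ^ 2) < |q.2.2|} := isOpen_lt (by fun_prop) (by fun_prop)
  refine (dirDerivList_eventuallyEq_zero l ?_).eq_of_nhds
  filter_upwards [hopen.mem_nhds hη] with q hq
  exact ha _ _ _ _ (le_of_lt hq)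

theorem exists_norm_dirDerivList_le {Y : Set (SplitSpace k)} {m ρ δ : ℝ} (hc : 0 ≤ c)
    (ha : VanishesOutsideCone c a) (hY : IsOpen Y) (hamp : IsAmplitudeP Y m ρ δ a)
    (α β β' : Fin (k + 1) → ℕ) {K : Set (SplitSpace k)} (hK : IsCompact K) (hKY : K ⊆ Y) :
    ∃ C, 0 ≤ C ∧ ∀ y ∈ K, ∀ y' ∈ K, ∀ η : SplitSpace k,
      ‖dirDerivList (jointDirs (multiIndexDirs (basisP k) β) (multiIndexDirs (basisP k) β')
          (multiIndexDirs (basisP k) α)) (uncurry₃ a) ((y, y'), η)‖ ≤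
        C * (1 + ‖η.1‖) ^ (m - ρ * mOrder α + δ * (mOrder β + mOrder β')) := by
  obtain ⟨C, hC⟩ := hamp.2 α β β' K hK hKY
  set s : ℝ := m - ρ * mOrder α + δ * (mOrder β + mOrder β')
  have hM : 1 ≤ 1 + (1 + c) * k := le_add_of_nonneg_right (by positivity)
  refine ⟨|C| * (1 + (1 + c) * k) ^ |s|, by positivity, fun y hy y' hy' η => ?_⟩
  rcases lt_or_ge (c * Real.sqrt (∑ i, η.1 i ^ 2)) |η.2| with hη | hη
  · rw [ha.dirDerivList_uncurry₃_eq_zero _ hη, norm_zero]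
    positivity
  rw [← nestedDirDeriv_eq_dirDerivList _ _ _ hY hY hamp.1 (hKY hy) (hKY hy')]
  have hcmp := rpow_le_rpow_abs_mul_rpow hM (by positivity)
    (add_le_add_right ((norm_fst_le η).trans (norm_le_eNormP η)) 1)
    (one_add_eNormP_le_of_cone hc hη) s
  have hpos : 0 ≤ (1 + eNormP η) ^ s := Real.rpow_nonneg (add_nonneg zero_le_one
    (Real.sqrt_nonneg _)) s
  calc _ ≤ C * (1 + eNormP η) ^ s := hC y hy y' hy' η
    _ ≤ |C| * ((1 + (1 + c) * k) ^ |s| * (1 + ‖η.1‖) ^ s) := by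
      gcongr
      exact le_abs_self C
    _ = _ := by ring

end VanishesOutsideCone

end Cone

section FibreAmplitude

variable {k : ℕ}

/-- The fibre amplitude `ã^♮(·, ·, ·; μ, ν)` of `a = ã`, with `μ = y_d` and `ν = y_d'`. -/
noncomputable def fibreAmplitude (a : SplitSpace k → SplitSpace k → SplitSpace k → ℂ) (μ ν : ℝ)
    (y₀ y₀' η₀ : Fin k → ℝ) : ℂ :=
  (((2 * Real.pi)⁻¹ : ℝ) : ℂ) *
    ∫ ηd : ℝ, a (y₀, μ) (y₀', ν) (η₀, ηd) *
      Complex.exp (Complex.I * (((μ - ν) * ηd : ℝ) : ℂ))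

/-- The normalised oscillating factor `(2π)⁻¹ e^{i s t}` in the integrand of the fibre
amplitude. -/
noncomputable def fibrePhase (s t : ℝ) : ℂ :=
  (((2 * Real.pi)⁻¹ : ℝ) : ℂ) * Complex.exp (Complex.I * ((s * t : ℝ) : ℂ))

/-- The space of the variables `((y₀, y₀'), η₀)` of a fibre amplitude. -/
abbrev FibreSpace (k : ℕ) := ((Fin k → ℝ) × (Fin k → ℝ)) × (Fin k → ℝ)

/-- The argument of `a` in the integrand of its fibre amplitude, as a function of the parameters
`(((y₀, y₀'), η₀), (μ, ν))` and the integration variable `η_d`. -/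
def fibrePoint (q : (FibreSpace k × (ℝ × ℝ)) × ℝ) :
    (SplitSpace k × SplitSpace k) × SplitSpace k :=
  (((q.1.1.1.1, q.1.2.1), (q.1.1.1.2, q.1.2.2)), (q.1.1.2, q.2))

theorem contDiff_fibrePoint : ContDiff ℝ (⊤ : ℕ∞) (fibrePoint (k := k)) := by
  unfold fibrePoint
  fun_prop

theorem contDiff_fibrePhase : ContDiff ℝ (⊤ : ℕ∞) fun q : ℝ × ℝ => fibrePhase q.1 q.2 :=
  contDiff_const.mul (contDiff_const.mul
    (Complex.ofRealCLM.contDiff.comp (contDiff_fst.mul contDiff_snd))).cexp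

theorem norm_fibrePhase_le (s t : ℝ) : ‖fibrePhase s t‖ ≤ 1 := by
  rw [fibrePhase, norm_mul, mul_comm Complex.I, Complex.norm_exp_ofReal_mul_I, mul_one,
    Complex.norm_of_nonneg (by positivity)]
  exact inv_le_one_of_one_le₀ (by linarith [Real.pi_gt_three])

theorem fibreAmplitude_eq_integral (a : SplitSpace k → SplitSpace k → SplitSpace k → ℂ) (μ ν : ℝ)
    (y₀ y₀' η₀ : Fin k → ℝ) :
    fibreAmplitude a μ ν y₀ y₀' η₀ =
      ∫ t, uncurry₃ a (fibrePoint ((((y₀, y₀'), η₀), (μ, ν)), t)) * fibrePhase (μ - ν) t := by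
  rw [fibreAmplitude, ← integral_const_mul]
  exact integral_congr_ae (.of_forall fun t => mul_left_comm _ _ _)

variable {a : SplitSpace k → SplitSpace k → SplitSpace k → ℂ} {c : ℝ}

theorem VanishesOutsideCone.hasCompactFibreSupport (ha : VanishesOutsideCone c a)
    (U : Set (FibreSpace k × (ℝ × ℝ))) :
    HasCompactFibreSupport (fun q => uncurry₃ a (fibrePoint q)) U :=
  hasCompactFibreSupport_of_norm_le
    (r := fun x : FibreSpace k × (ℝ × ℝ) => c * Real.sqrt (∑ i, x.1.2 i ^ 2))
    (by fun_prop) (fun _ _ ht => ha _ _ _ _ ht.le) U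

variable {Sig : Set (Fin k → ℝ)} {Λ : Set ℝ}

theorem contDiffOn_uncurry₃_fibrePoint
    (hsm : ContDiffOn ℝ (⊤ : ℕ∞) (uncurry₃ a) (((Sig ×ˢ Λ) ×ˢ (Sig ×ˢ Λ)) ×ˢ Set.univ)) :
    ContDiffOn ℝ (⊤ : ℕ∞) (fun q => uncurry₃ a (fibrePoint q))
      ((((Sig ×ˢ Sig) ×ˢ Set.univ) ×ˢ (Λ ×ˢ Λ)) ×ˢ Set.univ) :=
  hsm.comp contDiff_fibrePoint.contDiffOn fun _ hq =>
    ⟨⟨⟨hq.1.1.1.1, hq.1.2.1⟩, ⟨hq.1.1.1.2, hq.1.2.2⟩⟩, trivial⟩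

theorem contDiffOn_fibreAmplitude (hSig : IsOpen Sig) (hΛ : IsOpen Λ)
    (hsm : ContDiffOn ℝ (⊤ : ℕ∞) (uncurry₃ a) (((Sig ×ˢ Λ) ×ˢ (Sig ×ˢ Λ)) ×ˢ Set.univ))
    (ha : VanishesOutsideCone c a) :
    ContDiffOn ℝ (⊤ : ℕ∞)
      (fun x : FibreSpace k × (ℝ × ℝ) => uncurry₃ (fibreAmplitude a x.2.1 x.2.2) x.1)
      (((Sig ×ˢ Sig) ×ˢ Set.univ) ×ˢ (Λ ×ˢ Λ)) := by
  have hphase : ContDiff ℝ (⊤ : ℕ∞) fun q : (FibreSpace k × (ℝ × ℝ)) × ℝ =>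
      fibrePhase (q.1.2.1 - q.1.2.2) q.2 :=
    contDiff_fibrePhase.comp (f := fun q : (FibreSpace k × (ℝ × ℝ)) × ℝ =>
      (q.1.2.1 - q.1.2.2, q.2)) (by fun_prop)
  refine (((ha.hasCompactFibreSupport _).mul_right
    fun q => fibrePhase (q.1.2.1 - q.1.2.2) q.2).contDiffOn_integral (μ := volume)
    (((hSig.prod hSig).prod isOpen_univ).prod (hΛ.prod hΛ))
    ((contDiffOn_uncurry₃_fibrePoint hsm).mul hphase.contDiffOn)).congr fun x _ => ?_
  exact fibreAmplitude_eq_integral a _ _ _ _ _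

theorem contDiffOn_uncurry₃_fibreAmplitude (hSig : IsOpen Sig) (hΛ : IsOpen Λ)
    (hsm : ContDiffOn ℝ (⊤ : ℕ∞) (uncurry₃ a) (((Sig ×ˢ Λ) ×ˢ (Sig ×ˢ Λ)) ×ˢ Set.univ))
    (ha : VanishesOutsideCone c a) {μ ν : ℝ} (hμ : μ ∈ Λ) (hν : ν ∈ Λ) :
    ContDiffOn ℝ (⊤ : ℕ∞) (uncurry₃ (fibreAmplitude a μ ν)) ((Sig ×ˢ Sig) ×ˢ Set.univ) :=
  (contDiffOn_fibreAmplitude hSig hΛ hsm ha).comp (contDiff_prodMk_left (μ, ν)).contDiffOn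
    fun _ hq => ⟨hq, hμ, hν⟩

theorem dirDerivList_uncurry₃_fibrePoint (hSig : IsOpen Sig) (hΛ : IsOpen Λ)
    (hsm : ContDiffOn ℝ (⊤ : ℕ∞) (uncurry₃ a) (((Sig ×ˢ Λ) ×ˢ (Sig ×ˢ Λ)) ×ˢ Set.univ))
    {μ ν : ℝ} (hμ : μ ∈ Λ) (hν : ν ∈ Λ) (la lb lc : List (Fin k → ℝ)) {q : FibreSpace k}
    (hq : q ∈ (Sig ×ˢ Sig) ×ˢ Set.univ) (t : ℝ) :
    dirDerivList ((jointDirs la lb lc).map (·, (0 : ℝ)))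
        (fun p => uncurry₃ a (fibrePoint ((p.1, (μ, ν)), p.2))) (q, t) =
      dirDerivList (jointDirs (la.map (·, 0)) (lb.map (·, 0)) (lc.map (·, 0))) (uncurry₃ a)
        (fibrePoint ((q, (μ, ν)), t)) := by
  let L : FibreSpace k × ℝ →L[ℝ] (SplitSpace k × SplitSpace k) × SplitSpace k :=
    { toFun := fun p => (((p.1.1.1, 0), (p.1.1.2, 0)), (p.1.2, p.2))
      map_add' := fun p p' => by simp
      map_smul' := fun r p => by simp
      cont := by fun_prop }
  have hL : ∀ p, HasFDerivAt (fun p => fibrePoint ((p.1, (μ, ν)), p.2)) L p := fun p => by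
    simpa [L, fibrePoint] using
      L.hasFDerivAt.add_const (fibrePoint (((0 : FibreSpace k), (μ, ν)), 0))
  have hdirs : ((jointDirs la lb lc).map (·, (0 : ℝ))).map L =
      jointDirs (la.map (·, 0)) (lb.map (·, 0)) (lc.map (·, 0)) := by
    simp only [jointDirs, List.map_append, List.map_map]
    rfl
  rw [← hdirs]
  exact dirDerivList_comp (φ := fun p : FibreSpace k × ℝ => fibrePoint ((p.1, (μ, ν)), p.2)) hL _
    (((hSig.prod hΛ).prod (hSig.prod hΛ)).prod isOpen_univ) hsm
    ⟨⟨⟨hq.1.1, hμ⟩, ⟨hq.1.2, hν⟩⟩, trivial⟩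

theorem dirDerivList_uncurry₃_fibreAmplitude (hSig : IsOpen Sig) (hΛ : IsOpen Λ)
    (hsm : ContDiffOn ℝ (⊤ : ℕ∞) (uncurry₃ a) (((Sig ×ˢ Λ) ×ˢ (Sig ×ˢ Λ)) ×ˢ Set.univ))
    (ha : VanishesOutsideCone c a) {μ ν : ℝ} (hμ : μ ∈ Λ) (hν : ν ∈ Λ)
    (la lb lc : List (Fin k → ℝ)) {q : FibreSpace k} (hq : q ∈ (Sig ×ˢ Sig) ×ˢ Set.univ) :
    dirDerivList (jointDirs la lb lc) (uncurry₃ (fibreAmplitude a μ ν)) q =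
      ∫ t, dirDerivList (jointDirs (la.map (·, 0)) (lb.map (·, 0)) (lc.map (·, 0))) (uncurry₃ a)
        (fibrePoint ((q, (μ, ν)), t)) * fibrePhase (μ - ν) t := by
  have hf : ContDiffOn ℝ (⊤ : ℕ∞)
      (fun p : FibreSpace k × ℝ => uncurry₃ a (fibrePoint ((p.1, (μ, ν)), p.2)))
      (((Sig ×ˢ Sig) ×ˢ Set.univ) ×ˢ Set.univ) :=
    (contDiffOn_uncurry₃_fibrePoint hsm).comp (f := fun p : FibreSpace k × ℝ =>
      ((p.1, (μ, ν)), p.2)) (by fun_prop) fun p hp => ⟨⟨hp.1, hμ, hν⟩, trivial⟩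
  have hsupp : HasCompactFibreSupport
      (fun p : FibreSpace k × ℝ => uncurry₃ a (fibrePoint ((p.1, (μ, ν)), p.2)))
      ((Sig ×ˢ Sig) ×ˢ Set.univ) :=
    hasCompactFibreSupport_of_norm_le (r := fun q : FibreSpace k => c * Real.sqrt (∑ i, q.2 i ^ 2))
      (by fun_prop) (fun _ _ ht => ha _ _ _ _ ht.le) _
  have hphase : ContDiff ℝ (⊤ : ℕ∞) (fibrePhase (μ - ν)) :=
    contDiff_fibrePhase.comp (contDiff_prodMk_right (μ - ν))
  have hfib : uncurry₃ (fibreAmplitude a μ ν) = fun q => ∫ t,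
      uncurry₃ a (fibrePoint ((q, (μ, ν)), t)) * fibrePhase (μ - ν) t :=
    funext fun q => fibreAmplitude_eq_integral a μ ν _ _ _
  rw [hfib, hsupp.dirDerivList_integral_mul ((hSig.prod hSig).prod isOpen_univ) hf hphase _ hq]
  exact integral_congr_ae (.of_forall fun t => congrArg (· * fibrePhase (μ - ν) t) <|
    dirDerivList_uncurry₃_fibrePoint hSig hΛ hsm hμ hν la lb lc hq t)

theorem norm_integral_mul_fibrePhase_le {g : ℝ → ℂ} {r A : ℝ} (hr : 0 ≤ r) (hg : ∀ t, ‖g t‖ ≤ A)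
    (hsupp : ∀ t, r < |t| → g t = 0) (s : ℝ) : ‖∫ t, g t * fibrePhase s t‖ ≤ A * (2 * r) := by
  have hzero : ∀ t ∉ Set.Icc (-r) r, g t * fibrePhase s t = 0 := fun t ht => by
    rw [Set.mem_Icc, ← abs_le, not_le] at ht
    rw [hsupp t ht, zero_mul]
  rw [← setIntegral_eq_integral_of_forall_compl_eq_zero hzero]
  have hbound : ∀ t, ‖g t * fibrePhase s t‖ ≤ A := fun t => by
    rw [norm_mul]
    exact (mul_le_of_le_one_right (norm_nonneg _) (norm_fibrePhase_le s t)).trans (hg t)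
  refine (norm_setIntegral_le_of_norm_le_const measure_Icc_lt_top fun t _ => hbound t).trans_eq ?_
  rw [Real.volume_real_Icc_of_le (by linarith)]
  ring

theorem exists_norm_nestedDirDeriv_fibreAmplitude_le {m ρ δ : ℝ} (hSig : IsOpen Sig)
    (hΛ : IsOpen Λ) (hamp : IsAmplitudeP (Sig ×ˢ Λ) m ρ δ a) (hc : 0 ≤ c)
    (ha : VanishesOutsideCone c a) (α β β' : Fin k → ℕ) {K : Set (Fin k → ℝ)} (hK : IsCompact K)
    (hKSig : K ⊆ Sig) {L : Set ℝ} (hL : IsCompact L) (hLΛ : L ⊆ Λ) :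
    ∃ C, ∀ μ ∈ L, ∀ ν ∈ L, ∀ y₀ ∈ K, ∀ y₀' ∈ K, ∀ η₀ : Fin k → ℝ,
      ‖nestedDirDeriv (coordDirs β) (coordDirs β') (coordDirs α) (fibreAmplitude a μ ν) y₀ y₀' η₀‖
        ≤ C * (1 + ‖η₀‖) ^ (m + 1 - ρ * mOrder α + δ * (mOrder β + mOrder β')) := by
  obtain ⟨C, hC, hbound⟩ := ha.exists_norm_dirDerivList_le hc (hSig.prod hΛ) hamp
    (Fin.snoc (α := fun _ => ℕ) α 0) (Fin.snoc (α := fun _ => ℕ) β 0)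
    (Fin.snoc (α := fun _ => ℕ) β' 0) (hK.prod hL) (Set.prod_mono hKSig hLΛ)
  simp only [multiIndexDirs_basisP_snoc_zero, mOrder_snoc_zero] at hbound
  refine ⟨C * (2 * (c * k)), fun μ hμ ν hν y₀ hy y₀' hy' η₀ => ?_⟩
  rw [nestedDirDeriv_eq_dirDerivList _ _ _ hSig hSig
      (contDiffOn_uncurry₃_fibreAmplitude hSig hΛ hamp.1 ha (hLΛ hμ) (hLΛ hν)) (hKSig hy)
      (hKSig hy'),
    dirDerivList_uncurry₃_fibreAmplitude hSig hΛ hamp.1 ha (hLΛ hμ) (hLΛ hν) _ _ _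
      ⟨⟨hKSig hy, hKSig hy'⟩, trivial⟩]
  set s := m - ρ * mOrder α + δ * (mOrder β + mOrder β')
  refine (norm_integral_mul_fibrePhase_le (r := c * Real.sqrt (∑ i, η₀ i ^ 2))
    (A := C * (1 + ‖η₀‖) ^ s) (by positivity)
    (fun t => hbound (y₀, μ) ⟨hy, hμ⟩ (y₀', ν) ⟨hy', hν⟩ (η₀, t))
    (fun t ht => ha.dirDerivList_uncurry₃_eq_zero _ ht) (μ - ν)).trans ?_
  have hpos : 0 < 1 + ‖η₀‖ := by positivity
  have hlen : Real.sqrt (∑ i, η₀ i ^ 2) ≤ k * (1 + ‖η₀‖) :=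
    (sqrt_sum_sq_le η₀).trans (by gcongr; linarith)
  calc C * (1 + ‖η₀‖) ^ s * (2 * (c * Real.sqrt (∑ i, η₀ i ^ 2)))
      ≤ C * (1 + ‖η₀‖) ^ s * (2 * (c * (k * (1 + ‖η₀‖)))) := by gcongr
    _ = C * (2 * (c * k)) * (1 + ‖η₀‖) ^ (s + 1) := by
      rw [Real.rpow_add_one hpos.ne']
      ring
    _ = _ := by
      congr 2
      ring

theorem isAmplitude_fibreAmplitude {m ρ δ : ℝ} (hSig : IsOpen Sig) (hΛ : IsOpen Λ)
    (hamp : IsAmplitudeP (Sig ×ˢ Λ) m ρ δ a) (hc : 0 ≤ c) (ha : VanishesOutsideCone c a)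
    {μ ν : ℝ} (hμ : μ ∈ Λ) (hν : ν ∈ Λ) :
    IsAmplitude Sig (m + 1) ρ δ (fibreAmplitude a μ ν) := by
  refine ⟨contDiffOn_uncurry₃_fibreAmplitude hSig hΛ hamp.1 ha hμ hν, fun α β β' K hK hKSig => ?_⟩
  obtain ⟨C, hC⟩ := exists_norm_nestedDirDeriv_fibreAmplitude_le hSig hΛ hamp hc ha α β β' hK hKSig
    (Set.toFinite {μ, ν}).isCompact (Set.pair_subset hμ hν)
  exact ⟨C, hC μ (Set.mem_insert _ _) ν (Set.mem_insert_of_mem _ rfl)⟩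

theorem continuousOn_nestedDirDeriv_fibreAmplitude (hSig : IsOpen Sig) (hΛ : IsOpen Λ)
    (hsm : ContDiffOn ℝ (⊤ : ℕ∞) (uncurry₃ a) (((Sig ×ˢ Λ) ×ˢ (Sig ×ˢ Λ)) ×ˢ Set.univ))
    (ha : VanishesOutsideCone c a) (la lb lc : List (Fin k → ℝ)) :
    ContinuousOn (fun x : (ℝ × ℝ) × FibreSpace k =>
      nestedDirDeriv la lb lc (fibreAmplitude a x.1.1 x.1.2) x.2.1.1 x.2.1.2 x.2.2)
      ((Λ ×ˢ Λ) ×ˢ ((Sig ×ˢ Sig) ×ˢ Set.univ)) := by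
  have hO : IsOpen (((Sig ×ˢ Sig) ×ˢ (Set.univ : Set (Fin k → ℝ))) ×ˢ (Λ ×ˢ Λ)) :=
    ((hSig.prod hSig).prod isOpen_univ).prod (hΛ.prod hΛ)
  have hsmooth := contDiffOn_fibreAmplitude hSig hΛ hsm ha
  have hcont := (contDiffOn_dirDerivList ((jointDirs la lb lc).map (·, 0)) hO hsmooth).continuousOn
  refine (hcont.comp continuous_swap.continuousOn fun x hx => ⟨hx.2, hx.1⟩).congr fun x hx => ?_
  have hjoint := nestedDirDeriv_eq_dirDerivList la lb lc hSig hSig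
    (contDiffOn_uncurry₃_fibreAmplitude hSig hΛ hsm ha hx.1.1 hx.1.2) hx.2.1.1 hx.2.1.2 x.2.2
  exact hjoint.trans <| dirDerivList_comp (φ := fun q => (q, x.1))
    (fun q => hasFDerivAt_prodMk_left q x.1) _ hO hsmooth ⟨hx.2, hx.1⟩

theorem exists_norm_nestedDirDeriv_fibreAmplitude_sub_le (hSig : IsOpen Sig) (hΛ : IsOpen Λ)
    (hsm : ContDiffOn ℝ (⊤ : ℕ∞) (uncurry₃ a) (((Sig ×ˢ Λ) ×ˢ (Sig ×ˢ Λ)) ×ˢ Set.univ))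
    (ha : VanishesOutsideCone c a) (la lb lc : List (Fin k → ℝ)) {K : Set (Fin k → ℝ)}
    (hK : IsCompact K) (hKSig : K ⊆ Sig) (R : ℝ) {μ ν : ℝ} (hμ : μ ∈ Λ) (hν : ν ∈ Λ) {ε : ℝ}
    (hε : 0 < ε) :
    ∃ r, 0 < r ∧ ∀ μ' ∈ Λ, ∀ ν' ∈ Λ, |μ' - μ| < r → |ν' - ν| < r →
      ∀ y₀ ∈ K, ∀ y₀' ∈ K, ∀ η₀ : Fin k → ℝ, ‖η₀‖ ≤ R →
        ‖nestedDirDeriv la lb lc (fibreAmplitude a μ' ν') y₀ y₀' η₀ -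
          nestedDirDeriv la lb lc (fibreAmplitude a μ ν) y₀ y₀' η₀‖ ≤ ε := by
  have hcompact : IsCompact ((K ×ˢ K) ×ˢ Metric.closedBall (0 : Fin k → ℝ) R) :=
    (hK.prod hK).prod (isCompact_closedBall _ _)
  have hcont := (continuousOn_nestedDirDeriv_fibreAmplitude hSig hΛ hsm ha la lb lc).mono
    (Set.prod_mono_right (Set.prod_mono (Set.prod_mono hKSig hKSig)
      (Set.subset_univ (Metric.closedBall 0 R))))
  obtain ⟨V, hV, hnear⟩ := hcompact.mem_uniformity_of_prod
    (f := fun (σ : ℝ × ℝ) (q : FibreSpace k) =>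
      nestedDirDeriv la lb lc (fibreAmplitude a σ.1 σ.2) q.1.1 q.1.2 q.2) hcont
    (Set.mk_mem_prod hμ hν) (Metric.dist_mem_uniformity hε)
  obtain ⟨r, hr, hball⟩ := Metric.mem_nhdsWithin_iff.1 hV
  refine ⟨r, hr, fun μ' hμ' ν' hν' hμr hνr y₀ hy y₀' hy' η₀ hη => ?_⟩
  rw [← dist_eq_norm]
  exact (hnear (μ', ν') (hball ⟨max_lt hμr hνr, hμ', hν'⟩) ((y₀, y₀'), η₀)
    ⟨⟨hy, hy'⟩, by simpa using hη⟩).le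

end FibreAmplitude

section OscillatoryIntegrals

theorem contDiff_mul_of_tsupport_subset {E : Type*} [NormedAddCommGroup E] [NormedSpace ℝ E]
    {f g : E → ℂ} {U : Set E} (hU : IsOpen U) (hf : ContDiffOn ℝ (⊤ : ℕ∞) f U)
    (hg : ContDiff ℝ (⊤ : ℕ∞) g) (hgU : tsupport g ⊆ U) :
    ContDiff ℝ (⊤ : ℕ∞) fun x => f x * g x :=
  contMDiff_iff_contDiff.1 <| contMDiff_of_tsupport fun _ hx =>
    ((hf.mul hg.contDiffOn).contDiffAt
      (hU.mem_nhds (hgU (tsupport_mul_subset_right hx)))).contMDiffAt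

theorem exists_norm_dirDerivList_le_of_hasCompactSupport {E : Type*} [NormedAddCommGroup E]
    [NormedSpace ℝ E] (l : List E) {g : E → ℂ} (hg : ContDiff ℝ (⊤ : ℕ∞) g)
    (hgc : HasCompactSupport g) : ∃ D, ∀ x, ‖dirDerivList l g x‖ ≤ D :=
  (contDiff_dirDerivList l hg).continuous.bounded_above_of_compact_support
    (hgc.mono' (support_dirDerivList_subset l g))

variable {E : Type*} [NormedAddCommGroup E] [NormedSpace ℝ E]

/-- The plane wave `y ↦ e^{-i φ(y)}` of frequency `φ`. -/
noncomputable def planeWave (φ : E →L[ℝ] ℝ) (y : E) : ℂ :=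
  Complex.exp (-(Complex.I * (φ y : ℂ)))

theorem norm_planeWave (φ : E →L[ℝ] ℝ) (y : E) : ‖planeWave φ y‖ = 1 := by
  rw [planeWave, Complex.norm_exp]
  simp

theorem hasFDerivAt_planeWave (φ : E →L[ℝ] ℝ) (y : E) :
    HasFDerivAt (planeWave φ)
      (planeWave φ y • -(Complex.I • Complex.ofRealCLM.comp φ)) y :=
  ((Complex.ofRealCLM.comp φ).hasFDerivAt.const_mul Complex.I).neg.cexp

theorem continuous_planeWave (φ : E →L[ℝ] ℝ) : Continuous (planeWave φ) :=
  continuous_iff_continuousAt.2 fun y => (hasFDerivAt_planeWave φ y).continuousAt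

variable [FiniteDimensional ℝ E] [MeasurableSpace E] [BorelSpace E] {μ : Measure E}
  [μ.IsAddHaarMeasure]

theorem mul_integral_planeWave_mul (φ : E →L[ℝ] ℝ) (v : E) {g : E → ℂ}
    (hg : ContDiff ℝ (⊤ : ℕ∞) g) (hgc : HasCompactSupport g) :
    (Complex.I * φ v) * ∫ y, planeWave φ y * g y ∂μ =
      ∫ y, planeWave φ y * dirDeriv v g y ∂μ := by
  have hwave : ∀ y, fderiv ℝ (planeWave φ) y v = -(Complex.I * φ v) * planeWave φ y := fun y => by
    rw [(hasFDerivAt_planeWave φ y).fderiv]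
    simp [mul_comm]
  have hint : ∀ h : E → ℂ, Continuous h → HasCompactSupport h →
      Integrable (fun y => planeWave φ y * h y) μ := fun h hh hhc =>
    ((continuous_planeWave φ).mul hh).integrable_of_hasCompactSupport hhc.mul_left
  have hparts := integral_mul_fderiv_eq_neg_fderiv_mul_of_integrable (𝕜 := ℂ) (μ := μ)
    (f := planeWave φ) (g := g) (v := v)
    (by simpa only [hwave, mul_assoc] using (hint g hg.continuous hgc).const_mul _)
    (hint _ (contDiff_dirDerivList [v] hg).continuous (hgc.fderiv_apply ℝ v))
    (hint g hg.continuous hgc)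
    (fun y _ => (hasFDerivAt_planeWave φ y).differentiableAt)
    (fun y _ => hg.differentiable (by simp) y)
  simp only [hwave, mul_assoc, integral_const_mul] at hparts
  rw [neg_mul, neg_neg, mul_assoc] at hparts
  rw [mul_assoc]
  exact hparts.symm

theorem pow_mul_integral_planeWave_mul (φ : E →L[ℝ] ℝ) (v : E) (n : ℕ) {g : E → ℂ}
    (hg : ContDiff ℝ (⊤ : ℕ∞) g) (hgc : HasCompactSupport g) :
    (Complex.I * φ v) ^ n * ∫ y, planeWave φ y * g y ∂μ =
      ∫ y, planeWave φ y * dirDerivList (List.replicate n v) g y ∂μ := by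
  induction n generalizing g with
  | zero => simp [dirDerivList]
  | succ n ih =>
    rw [dirDerivList_replicate_succ,
      ← ih (g := dirDeriv v g) (contDiff_dirDerivList [v] hg) (hgc.fderiv_apply ℝ v),
      ← mul_integral_planeWave_mul φ v hg hgc, pow_succ, mul_assoc]

theorem abs_pow_mul_norm_integral_planeWave_mul_le (φ : E →L[ℝ] ℝ) (v : E) (n : ℕ) {g : E → ℂ}
    (hg : ContDiff ℝ (⊤ : ℕ∞) g) {K : Set E} (hK : IsCompact K) (hgK : ∀ y ∉ K, g y = 0) {B : ℝ}
    (hB : ∀ y, ‖dirDerivList (List.replicate n v) g y‖ ≤ B) :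
    |φ v| ^ n * ‖∫ y, planeWave φ y * g y ∂μ‖ ≤ B * μ.real K := by
  have hgc : HasCompactSupport g := .intro hK hgK
  have hsupp : tsupport g ⊆ K := hK.isClosed.closure_subset_iff.2 fun y hy => by
    contrapose! hy
    exact Function.notMem_support.2 (hgK y hy)
  calc |φ v| ^ n * ‖∫ y, planeWave φ y * g y ∂μ‖
      = ‖(Complex.I * φ v) ^ n * ∫ y, planeWave φ y * g y ∂μ‖ := by simp
    _ = ‖∫ y in K, planeWave φ y * dirDerivList (List.replicate n v) g y ∂μ‖ := by
      rw [pow_mul_integral_planeWave_mul φ v n hg hgc,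
        setIntegral_eq_integral_of_forall_compl_eq_zero]
      intro y hy
      rw [Function.notMem_support.1 fun h => hy (hsupp (support_dirDerivList_subset _ g h)),
        mul_zero]
    _ ≤ B * μ.real K := norm_setIntegral_le_of_norm_le_const hK.measure_lt_top fun y _ => by
      rw [norm_mul, norm_planeWave, one_mul]
      exact hB y

theorem one_add_norm_pow_mul_le {ι : Type*} [Fintype ι] [Nonempty ι] (x : ι → ℝ) (n : ℕ)
    {p B : ℝ} (hp : 0 ≤ p) (h₀ : p ≤ B) (hn : ∀ j, |x j| ^ n * p ≤ B) :
    (1 + ‖x‖) ^ n * p ≤ 2 ^ (n - 1) * (2 * B) := by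
  obtain ⟨j, hj⟩ := Finite.exists_max fun j => |x j|
  have hxj : ‖x‖ ≤ |x j| := (pi_norm_le_iff_of_nonneg (abs_nonneg _)).2 hj
  calc (1 + ‖x‖) ^ n * p ≤ (1 + |x j|) ^ n * p := by gcongr
    _ ≤ 2 ^ (n - 1) * (1 ^ n + |x j| ^ n) * p := by
      gcongr
      exact add_pow_le zero_le_one (abs_nonneg _) n
    _ = 2 ^ (n - 1) * (p + |x j| ^ n * p) := by ring
    _ ≤ 2 ^ (n - 1) * (2 * B) := by
      gcongr
      linarith [hn j]

end OscillatoryIntegrals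

section PartialPairing

/-- `u` belongs to `C₀^∞(Y)`. -/
structure IsTestFunctionOn {E : Type*} [NormedAddCommGroup E] [NormedSpace ℝ E] (Y : Set E)
    (u : E → ℂ) : Prop where
  contDiff : ContDiff ℝ (⊤ : ℕ∞) u
  hasCompactSupport : HasCompactSupport u
  tsupport_subset : tsupport u ⊆ Y

variable {k : ℕ}

/-- The integrand of `(Au, v)` as a function of `((y, y'), η)`. -/
noncomputable def pairingIntegrand (a : SplitSpace k → SplitSpace k → SplitSpace k → ℂ)
    (u v : SplitSpace k → ℂ) (q : (SplitSpace k × SplitSpace k) × SplitSpace k) : ℂ :=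
  Complex.exp (Complex.I * (dotP (q.1.1 - q.1.2) q.2 : ℂ)) * a q.1.1 q.1.2 q.2 * u q.1.2 *
    (starRingEnd ℂ) (v q.1.1)

/-- The integral of the integrand of `(Au, v)` over `y₀'` alone, with `ν = y_d'`: the one
integration that must precede the others, as it produces decay in `η`. -/
noncomputable def partialPairing (a : SplitSpace k → SplitSpace k → SplitSpace k → ℂ)
    (u v : SplitSpace k → ℂ) (w : SplitSpace k) (ν : ℝ) (η : SplitSpace k) : ℂ :=
  ∫ y' : Fin k → ℝ, pairingIntegrand a u v ((w, (y', ν)), η)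

/-- The linear functional `x ↦ ⟨x, ξ⟩`. -/
noncomputable def dotpCLM (ξ : Fin k → ℝ) : (Fin k → ℝ) →L[ℝ] ℝ :=
  ∑ i, ξ i • ContinuousLinearMap.proj i

theorem dotpCLM_apply (ξ x : Fin k → ℝ) : dotpCLM ξ x = dotp x ξ := by
  simp [dotpCLM, dotp, mul_comm]

theorem dotpCLM_single (ξ : Fin k → ℝ) (j : Fin k) : dotpCLM ξ (Pi.single j 1) = ξ j := by
  simp [dotpCLM_apply, dotp, Pi.single_apply]

variable {a : SplitSpace k → SplitSpace k → SplitSpace k → ℂ} {u v : SplitSpace k → ℂ}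

theorem pairingIntegrand_eq_zero_of_notMem_tsupport_left
    {q : (SplitSpace k × SplitSpace k) × SplitSpace k} (hq : q.1.2 ∉ tsupport u) :
    pairingIntegrand a u v q = 0 := by
  simp [pairingIntegrand, image_eq_zero_of_notMem_tsupport hq]

theorem pairingIntegrand_eq_zero_of_notMem_tsupport_right
    {q : (SplitSpace k × SplitSpace k) × SplitSpace k} (hq : q.1.1 ∉ tsupport v) :
    pairingIntegrand a u v q = 0 := by
  simp [pairingIntegrand, image_eq_zero_of_notMem_tsupport hq]

theorem partialPairing_eq_zero_of_notMem_tsupport_left (w : SplitSpace k) {ν : ℝ}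
    (hν : ν ∉ Prod.snd '' tsupport u) (η : SplitSpace k) : partialPairing a u v w ν η = 0 :=
  integral_eq_zero_of_ae <| .of_forall fun _ =>
    pairingIntegrand_eq_zero_of_notMem_tsupport_left fun h => hν ⟨_, h, rfl⟩

theorem partialPairing_eq_zero_of_notMem_tsupport_right {w : SplitSpace k} (hw : w ∉ tsupport v)
    (ν : ℝ) (η : SplitSpace k) : partialPairing a u v w ν η = 0 :=
  integral_eq_zero_of_ae <| .of_forall fun _ =>
    pairingIntegrand_eq_zero_of_notMem_tsupport_right hw

theorem norm_partialPairing (w : SplitSpace k) (ν : ℝ) (η : SplitSpace k) :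
    ‖partialPairing a u v w ν η‖ =
      ‖∫ y', planeWave (dotpCLM η.1) y' * (a w (y', ν) η * u (y', ν))‖ * ‖v w‖ := by
  have hphase : ∀ y' : Fin k → ℝ, Complex.exp (Complex.I * (dotP (w - (y', ν)) η : ℂ)) =
      Complex.exp (Complex.I * (dotp w.1 η.1 + (w.2 - ν) * η.2 : ℝ)) *
        planeWave (dotpCLM η.1) y' := by
    intro y'
    rw [planeWave, ← Complex.exp_add, dotpCLM_apply]
    congr 1
    simp only [dotP, dotp, Prod.fst_sub, Prod.snd_sub, Pi.sub_apply, sub_mul,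
      Finset.sum_sub_distrib]
    push_cast
    ring
  have hfactor : partialPairing a u v w ν η =
      Complex.exp (Complex.I * (dotp w.1 η.1 + (w.2 - ν) * η.2 : ℝ)) *
        (∫ y', planeWave (dotpCLM η.1) y' * (a w (y', ν) η * u (y', ν))) *
          (starRingEnd ℂ) (v w) := by
    simp only [partialPairing, pairingIntegrand, hphase, ← integral_const_mul, ← integral_mul_const]
    exact integral_congr_ae (.of_forall fun y' => by ring)
  rw [hfactor, norm_mul, norm_mul, RCLike.norm_conj, mul_comm Complex.I,
    Complex.norm_exp_ofReal_mul_I, one_mul]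

variable {Y : Set (SplitSpace k)}

theorem contDiffOn_amplitude_slice
    (hsm : ContDiffOn ℝ (⊤ : ℕ∞) (uncurry₃ a) ((Y ×ˢ Y) ×ˢ Set.univ)) {w : SplitSpace k}
    (hw : w ∈ Y) (ν : ℝ) (η : SplitSpace k) :
    ContDiffOn ℝ (⊤ : ℕ∞) (fun y' : Fin k → ℝ => a w (y', ν) η) {y' | (y', ν) ∈ Y} :=
  hsm.comp (f := fun y' : Fin k → ℝ => ((w, (y', ν)), η)) (by fun_prop)
    fun _ hy' => ⟨⟨hw, hy'⟩, trivial⟩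

theorem IsTestFunctionOn.slice (hu : IsTestFunctionOn Y u) (ν : ℝ) :
    IsTestFunctionOn {y' | (y', ν) ∈ Y} fun y' : Fin k → ℝ => u (y', ν) where
  contDiff := hu.contDiff.comp (by fun_prop)
  hasCompactSupport := .intro (hu.hasCompactSupport.isCompact.image continuous_fst) fun _ hy' =>
    image_eq_zero_of_notMem_tsupport fun h => hy' ⟨_, h, rfl⟩
  tsupport_subset := (tsupport_comp_subset_preimage u (by fun_prop)).trans
    fun _ hy' => hu.tsupport_subset hy'

theorem exists_norm_dirDerivList_amplitude_slice_le {c m ρ δ : ℝ} (hc : 0 ≤ c)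
    (ha : VanishesOutsideCone c a) (hY : IsOpen Y) (hamp : IsAmplitudeP Y m ρ δ a)
    {K : Set (SplitSpace k)} (hK : IsCompact K) (hKY : K ⊆ Y) (n : ℕ) (j : Fin k) :
    ∃ C, 0 ≤ C ∧ ∀ i ≤ n, ∀ w ∈ K, ∀ (y' : Fin k → ℝ) (ν : ℝ), (y', ν) ∈ K → ∀ η : SplitSpace k,
      ‖dirDerivList (List.replicate i (Pi.single j 1)) (fun y' => a w (y', ν) η) y'‖ ≤
        C * (1 + ‖η.1‖) ^ (m + max δ 0 * n) := by
  have hjoint := fun i : ℕ => ha.exists_norm_dirDerivList_le hc hY hamp 0 0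
    (Pi.single j.castSucc i) hK hKY
  choose C hC₀ hC using hjoint
  refine ⟨∑ i ∈ Finset.range (n + 1), C i, Finset.sum_nonneg fun i _ => hC₀ i,
    fun i hi w hw y' ν hy' η => ?_⟩
  have hbasis : basisP k j.castSucc = (Pi.single j 1, 0) := by simp [basisP]
  have hslice : dirDerivList (List.replicate i (Pi.single j 1)) (fun y' => a w (y', ν) η) y' =
      dirDerivList (jointDirs [] (List.replicate i (Pi.single j 1, 0)) []) (uncurry₃ a)
        ((w, (y', ν)), η) := by
    refine (dirDerivList_comp (φ := fun y' : Fin k → ℝ => ((w, (y', ν)), η)) (f := uncurry₃ a)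
      (fun y' => ((hasFDerivAt_const w y').prodMk (hasFDerivAt_prodMk_left y' ν)).prodMk
        (hasFDerivAt_const η y')) _ ((hY.prod hY).prod isOpen_univ) hamp.1
        ⟨⟨hKY hw, hKY hy'⟩, trivial⟩).trans ?_
    simp [jointDirs]
  have hbound := hC i w hw (y', ν) hy' η
  rw [multiIndexDirs_zero, multiIndexDirs_single, mOrder_zero, mOrder_single, hbasis,
    ← hslice] at hbound
  refine hbound.trans (mul_le_mul (Finset.single_le_sum (fun i _ => hC₀ i)
    (Finset.mem_range.2 (Nat.lt_succ_of_le hi))) ?_ (by positivity)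
    (Finset.sum_nonneg fun i _ => hC₀ i))
  refine Real.rpow_le_rpow_of_exponent_le (le_add_of_nonneg_right (norm_nonneg _)) ?_
  have hexp : δ * i ≤ max δ 0 * n := by
    gcongr
    exact le_max_left _ _
  push_cast
  linarith

theorem IsTestFunctionOn.exists_norm_dirDerivList_slice_le (hu : IsTestFunctionOn Y u) (n : ℕ)
    (e : Fin k → ℝ) : ∃ D, 0 ≤ D ∧ ∀ i ≤ n, ∀ (y' : Fin k → ℝ) (ν : ℝ),
      ‖dirDerivList (List.replicate i e) (fun y' => u (y', ν)) y'‖ ≤ D := by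
  choose D hD using fun i : ℕ => exists_norm_dirDerivList_le_of_hasCompactSupport
    (List.replicate i ((e, 0) : SplitSpace k)) hu.contDiff hu.hasCompactSupport
  have hD₀ : ∀ i, 0 ≤ D i := fun i => (norm_nonneg _).trans (hD i 0)
  refine ⟨∑ i ∈ Finset.range (n + 1), D i, Finset.sum_nonneg fun i _ => hD₀ i,
    fun i hi y' ν => ?_⟩
  rw [dirDerivList_comp (φ := fun y' : Fin k → ℝ => (y', ν)) (f := u)
    (fun y' => hasFDerivAt_prodMk_left y' ν) _ isOpen_univ hu.contDiff.contDiffOn trivial]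
  refine le_trans ?_ (Finset.single_le_sum (fun i _ => hD₀ i)
    (Finset.mem_range.2 (Nat.lt_succ_of_le hi)))
  simpa using hD i (y', ν)

theorem exists_norm_dirDerivList_amplitude_mul_slice_le {c m ρ δ : ℝ} (hc : 0 ≤ c)
    (ha : VanishesOutsideCone c a) (hY : IsOpen Y) (hamp : IsAmplitudeP Y m ρ δ a)
    (hu : IsTestFunctionOn Y u) {K : Set (SplitSpace k)} (hK : IsCompact K) (hKY : K ⊆ Y) (n : ℕ)
    (j : Fin k) :
    ∃ C, 0 ≤ C ∧ ∀ w ∈ K, ∀ (y' : Fin k → ℝ) (ν : ℝ) (η : SplitSpace k),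
      ‖dirDerivList (List.replicate n (Pi.single j 1))
          (fun y' => a w (y', ν) η * u (y', ν)) y'‖ ≤
        C * (1 + ‖η.1‖) ^ (m + max δ 0 * n) := by
  obtain ⟨A, hA₀, hA⟩ := exists_norm_dirDerivList_amplitude_slice_le hc ha hY hamp
    (hK.union hu.hasCompactSupport.isCompact) (Set.union_subset hKY hu.tsupport_subset) n j
  obtain ⟨D, hD₀, hD⟩ := hu.exists_norm_dirDerivList_slice_le n (Pi.single j 1)
  refine ⟨2 ^ n * (A * D), by positivity, fun w hw y' ν η => ?_⟩
  by_cases hy' : (y', ν) ∈ tsupport u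
  · refine (norm_dirDerivList_replicate_mul_le (U := {y' | (y', ν) ∈ Y})
      (f := fun y' => a w (y', ν) η) (g := fun y' => u (y', ν)) (x := y')
      (A := A * (1 + ‖η.1‖) ^ (m + max δ 0 * n)) n (Pi.single j 1)
      (hY.preimage (by fun_prop)) (by positivity)
      (hu.tsupport_subset hy') (contDiffOn_amplitude_slice hamp.1 (hKY hw) ν η)
      (hu.slice ν).contDiff.contDiffOn (fun i hi => hA i hi w (.inl hw) y' ν (.inr hy') η)
      (fun i hi => hD i hi y' ν)).trans_eq (by ring)
  · have hzero : (fun y' => a w (y', ν) η * u (y', ν)) =ᶠ[𝓝 y'] 0 := by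
      have hev := (isClosed_tsupport u).isOpen_compl.preimage
        (f := fun y' : Fin k → ℝ => (y', ν)) (by fun_prop)
      filter_upwards [hev.mem_nhds hy'] with z hz
      simp [image_eq_zero_of_notMem_tsupport hz]
    rw [(dirDerivList_eventuallyEq_zero _ hzero).eq_of_nhds, Pi.zero_apply, norm_zero]
    positivity

theorem exists_abs_pow_mul_norm_partialPairing_le {c m ρ δ : ℝ} (hc : 0 ≤ c)
    (ha : VanishesOutsideCone c a) (hY : IsOpen Y) (hamp : IsAmplitudeP Y m ρ δ a)
    (hu : IsTestFunctionOn Y u) (hv : IsTestFunctionOn Y v) (n : ℕ) (j : Fin k) :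
    ∃ C, 0 ≤ C ∧ ∀ (w : SplitSpace k) (ν : ℝ) (η : SplitSpace k),
      |η.1 j| ^ n * ‖partialPairing a u v w ν η‖ ≤ C * (1 + ‖η.1‖) ^ (m + max δ 0 * n) := by
  obtain ⟨C, hC₀, hC⟩ := exists_norm_dirDerivList_amplitude_mul_slice_le hc ha hY hamp hu
    hv.hasCompactSupport.isCompact hv.tsupport_subset n j
  obtain ⟨V, hV⟩ := hv.contDiff.continuous.bounded_above_of_compact_support hv.hasCompactSupport
  have hV₀ : 0 ≤ V := (norm_nonneg _).trans (hV 0)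
  have hK : IsCompact (Prod.fst '' tsupport u) :=
    hu.hasCompactSupport.isCompact.image continuous_fst
  refine ⟨C * volume.real (Prod.fst '' tsupport u) * V, by positivity, fun w ν η => ?_⟩
  by_cases hw : w ∈ tsupport v
  · have hsm := contDiff_mul_of_tsupport_subset (hY.preimage (by fun_prop))
      (contDiffOn_amplitude_slice hamp.1 (hv.tsupport_subset hw) ν η) (hu.slice ν).contDiff
      (hu.slice ν).tsupport_subset
    have hosc := abs_pow_mul_norm_integral_planeWave_mul_le (μ := volume) (dotpCLM η.1)
      (Pi.single j 1) n hsm hK (fun y' hy' => by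
        rw [image_eq_zero_of_notMem_tsupport fun h => hy' ⟨_, h, rfl⟩, mul_zero])
      (fun y' => hC w hw y' ν η)
    rw [dotpCLM_single] at hosc
    calc _ = |η.1 j| ^ n *
          ‖∫ y', planeWave (dotpCLM η.1) y' * (a w (y', ν) η * u (y', ν))‖ * ‖v w‖ := by
            rw [norm_partialPairing, mul_assoc]
      _ ≤ C * (1 + ‖η.1‖) ^ (m + max δ 0 * n) * volume.real (Prod.fst '' tsupport u) * V := by
            gcongr
            exact hV w
      _ = _ := by ring
  · rw [partialPairing_eq_zero_of_notMem_tsupport_right hw, norm_zero, mul_zero]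
    positivity

end PartialPairing

section PairingDecay

variable {k : ℕ} {a : SplitSpace k → SplitSpace k → SplitSpace k → ℂ} {u v : SplitSpace k → ℂ}
  {Y : Set (SplitSpace k)} {c m ρ δ : ℝ}

theorem VanishesOutsideCone.partialPairing_eq_zero (ha : VanishesOutsideCone c a)
    (w : SplitSpace k) (ν : ℝ) {η : SplitSpace k}
    (hη : c * Real.sqrt (∑ i, η.1 i ^ 2) ≤ |η.2|) : partialPairing a u v w ν η = 0 :=
  integral_eq_zero_of_ae <| .of_forall fun y' => by
    simp [pairingIntegrand, ha w (y', ν) η.1 η.2 hη]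

theorem exists_norm_partialPairing_le_rpow_norm_fst [Nonempty (Fin k)] (hδ : δ < 1) (hc : 0 ≤ c)
    (ha : VanishesOutsideCone c a) (hY : IsOpen Y) (hamp : IsAmplitudeP Y m ρ δ a)
    (hu : IsTestFunctionOn Y u) (hv : IsTestFunctionOn Y v) (r : ℝ) :
    ∃ C, 0 ≤ C ∧ ∀ (w : SplitSpace k) (ν : ℝ) (η : SplitSpace k),
      ‖partialPairing a u v w ν η‖ ≤ C * (1 + ‖η.1‖) ^ (-r) := by
  have hd : 0 < 1 - max δ 0 := sub_pos.2 (max_lt hδ one_pos)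
  obtain ⟨n, hn⟩ := exists_nat_ge ((m + r) / (1 - max δ 0))
  rw [div_le_iff₀ hd] at hn
  set s : ℝ := m + max δ 0 * n
  choose A hA₀ hA using exists_abs_pow_mul_norm_partialPairing_le hc ha hY hamp hu hv n
  choose B hB₀ hB using exists_abs_pow_mul_norm_partialPairing_le hc ha hY hamp hu hv 0
  set S : ℝ := ∑ j, (A j + B j)
  have hS₀ : 0 ≤ S := Finset.sum_nonneg fun j _ => add_nonneg (hA₀ j) (hB₀ j)
  have hS : ∀ j, A j + B j ≤ S := fun j => Finset.single_le_sum (f := fun j => A j + B j)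
    (fun j _ => add_nonneg (hA₀ j) (hB₀ j)) (Finset.mem_univ j)
  refine ⟨2 ^ (n - 1) * (2 * S), by positivity, fun w ν η => ?_⟩
  have hb : 1 ≤ 1 + ‖η.1‖ := le_add_of_nonneg_right (norm_nonneg _)
  have hA' : ∀ j, |η.1 j| ^ n * ‖partialPairing a u v w ν η‖ ≤ S * (1 + ‖η.1‖) ^ s := fun j =>
    (hA j w ν η).trans (by gcongr; linarith [hS j, hB₀ j])
  have hB' : ‖partialPairing a u v w ν η‖ ≤ S * (1 + ‖η.1‖) ^ s := by
    obtain ⟨j⟩ := ‹Nonempty (Fin k)›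
    have hj := hB j w ν η
    rw [pow_zero, one_mul, Nat.cast_zero, mul_zero, add_zero] at hj
    refine hj.trans (mul_le_mul (by linarith [hS j, hA₀ j]) ?_ (by positivity) hS₀)
    exact Real.rpow_le_rpow_of_exponent_le hb (le_add_of_nonneg_right (by positivity))
  have hpow := one_add_norm_pow_mul_le η.1 n (norm_nonneg _) hB' hA'
  calc ‖partialPairing a u v w ν η‖
      ≤ 2 ^ (n - 1) * (2 * (S * (1 + ‖η.1‖) ^ s)) / (1 + ‖η.1‖) ^ n := by
        rwa [le_div_iff₀' (by positivity)]
    _ = 2 ^ (n - 1) * (2 * S) * (1 + ‖η.1‖) ^ (s - n) := by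
        rw [Real.rpow_sub (by positivity), Real.rpow_natCast]
        ring
    _ ≤ 2 ^ (n - 1) * (2 * S) * (1 + ‖η.1‖) ^ (-r) := by
        gcongr ?_ * ?_
        exact Real.rpow_le_rpow_of_exponent_le hb (by linarith)

theorem exists_norm_partialPairing_le_rpow_norm (hδ : δ < 1) (hc : 0 ≤ c)
    (ha : VanishesOutsideCone c a) (hY : IsOpen Y) (hamp : IsAmplitudeP Y m ρ δ a)
    (hu : IsTestFunctionOn Y u) (hv : IsTestFunctionOn Y v) (r : ℝ) :
    ∃ C, ∀ (w : SplitSpace k) (ν : ℝ) (η : SplitSpace k),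
      ‖partialPairing a u v w ν η‖ ≤ C * (1 + ‖η‖) ^ (-r) := by
  rcases isEmpty_or_nonempty (Fin k) with hk | hk
  · exact ⟨0, fun w ν η => by simp [ha.partialPairing_eq_zero w ν (η := η) (by simp)]⟩
  obtain ⟨C, hC₀, hC⟩ :=
    exists_norm_partialPairing_le_rpow_norm_fst hδ hc ha hY hamp hu hv r
  have hM : 1 ≤ 1 + (1 + c) * k := le_add_of_nonneg_right (by positivity)
  refine ⟨C * (1 + (1 + c) * k) ^ |r|, fun w ν η => ?_⟩
  rcases le_or_gt (c * Real.sqrt (∑ i, η.1 i ^ 2)) |η.2| with hη | hη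
  · rw [ha.partialPairing_eq_zero w ν hη, norm_zero]
    positivity
  have hcmp := rpow_le_rpow_abs_mul_rpow hM (by positivity)
    (add_le_add_right (norm_fst_le η) 1)
    ((add_le_add_right (norm_le_eNormP η) 1).trans (one_add_eNormP_le_of_cone hc hη.le)) r
  calc ‖partialPairing a u v w ν η‖ ≤ C * (1 + ‖η.1‖) ^ (-r) := hC w ν η
    _ ≤ C * ((1 + (1 + c) * k) ^ |r| * (1 + ‖η‖) ^ (-r)) := by
        gcongr
        rw [Real.rpow_neg (by positivity), Real.rpow_neg (by positivity), ← div_eq_mul_inv,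
          inv_eq_one_div, div_le_div_iff₀ (by positivity) (by positivity), one_mul]
        exact hcmp
    _ = _ := by ring

theorem integrable_one_add_norm_splitSpace {r : ℝ} (hr : (k : ℝ) + 1 < r) :
    Integrable fun η : SplitSpace k => (1 + ‖η‖) ^ (-r) := by
  have : (volume : Measure (SplitSpace k)).IsAddHaarMeasure :=
    inferInstanceAs ((volume : Measure (Fin k → ℝ)).prod (volume : Measure ℝ)).IsAddHaarMeasure
  refine integrable_one_add_norm ?_
  simpa using hr

theorem exists_integrable_norm_partialPairing_le (hδ : δ < 1) (hc : 0 ≤ c)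
    (ha : VanishesOutsideCone c a) (hY : IsOpen Y) (hamp : IsAmplitudeP Y m ρ δ a)
    (hu : IsTestFunctionOn Y u) (hv : IsTestFunctionOn Y v) :
    ∃ D : SplitSpace k → ℝ, Integrable D ∧ ∀ w ν η, ‖partialPairing a u v w ν η‖ ≤ D η :=
  let ⟨C, hC⟩ := exists_norm_partialPairing_le_rpow_norm hδ hc ha hY hamp hu hv (k + 2)
  ⟨_, (integrable_one_add_norm_splitSpace (by linarith)).const_mul C, hC⟩

theorem continuous_pairingIntegrand (hY : IsOpen Y)
    (hsm : ContDiffOn ℝ (⊤ : ℕ∞) (uncurry₃ a) ((Y ×ˢ Y) ×ˢ Set.univ))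
    (hu : IsTestFunctionOn Y u) (hv : IsTestFunctionOn Y v) :
    Continuous (pairingIntegrand a u v) := by
  have hsupp : tsupport (pairingIntegrand a u v) ⊆ (tsupport v ×ˢ tsupport u) ×ˢ Set.univ := by
    refine closure_minimal (fun q hq => ⟨⟨?_, ?_⟩, trivial⟩)
      (((isClosed_tsupport v).prod (isClosed_tsupport u)).prod isClosed_univ)
    · exact by_contra fun h => hq (pairingIntegrand_eq_zero_of_notMem_tsupport_right h)
    · exact by_contra fun h => hq (pairingIntegrand_eq_zero_of_notMem_tsupport_left h)
  refine continuous_of_tsupport fun q hq => ?_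
  obtain ⟨⟨hqv, hqu⟩, -⟩ := hsupp hq
  have haq : ContinuousAt (uncurry₃ a) q := hsm.continuousOn.continuousAt
    (((hY.prod hY).prod isOpen_univ).mem_nhds
      ⟨⟨hv.tsupport_subset hqv, hu.tsupport_subset hqu⟩, trivial⟩)
  have hphase : Continuous fun q : (SplitSpace k × SplitSpace k) × SplitSpace k =>
      Complex.exp (Complex.I * (dotP (q.1.1 - q.1.2) q.2 : ℂ)) := by
    unfold dotP dotp
    fun_prop
  have hcu := hu.contDiff.continuous
  have hcv := hv.contDiff.continuous
  exact ((hphase.continuousAt.mul haq).mul (by fun_prop)).mul (by fun_prop)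

theorem continuous_partialPairing (hH : Continuous (pairingIntegrand a u v))
    (hu : HasCompactSupport u) :
    Continuous fun q : (SplitSpace k × ℝ) × SplitSpace k =>
      partialPairing a u v q.1.1 q.1.2 q.2 := by
  have hcont := continuous_parametric_integral_of_continuous (μ := (volume : Measure (Fin k → ℝ)))
    (f := fun (q : (SplitSpace k × ℝ) × SplitSpace k) y' =>
      pairingIntegrand a u v ((q.1.1, (y', q.1.2)), q.2))
    (hH.comp (by fun_prop)) (hu.isCompact.image continuous_fst)
  refine hcont.congr fun q => setIntegral_eq_integral_of_forall_compl_eq_zero fun y' hy' => ?_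
  exact pairingIntegrand_eq_zero_of_notMem_tsupport_left fun h => hy' ⟨_, h, rfl⟩

end PairingDecay

section FibrePairing

theorem integrable_prod_of_norm_le {Z H F : Type*} [MeasurableSpace Z] [MeasurableSpace H]
    [NormedAddCommGroup F] {μ : Measure Z} {τ : Measure H} [SFinite τ] {f : Z × H → F}
    (hf : AEStronglyMeasurable f (μ.prod τ)) {D : H → ℝ} (hD : Integrable D τ)
    (hfD : ∀ z h, ‖f (z, h)‖ ≤ D h) {S : Set Z} (hS : MeasurableSet S) (hμS : μ S ≠ ⊤)
    (hfS : ∀ z ∉ S, ∀ h, f (z, h) = 0) : Integrable f (μ.prod τ) := by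
  have hone : Integrable (S.indicator fun _ => (1 : ℝ)) μ :=
    (integrable_indicator_iff hS).2 (integrableOn_const hμS)
  refine (hone.mul_prod hD).mono' hf (.of_forall fun ⟨z, h⟩ => ?_)
  by_cases hz : z ∈ S
  · simpa [Set.indicator_of_mem hz] using hfD z h
  · simp [Set.indicator_of_notMem hz, hfS z hz]

variable {k : ℕ} {a : SplitSpace k → SplitSpace k → SplitSpace k → ℂ} {u v : SplitSpace k → ℂ}
  {D : SplitSpace k → ℝ}

/-- The part `∬ e^{i⟨w - w', η⟩} a(w, w', η) u(w') v̄(w) dy₀' dη` of `(Au, v)` at fixed `w` and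
fixed last coordinate `ν` of `w'`: up to `(2π)^{-d}`, both sides of the kernel formula for `A` are
integrals of it. -/
noncomputable def fibrePairing (a : SplitSpace k → SplitSpace k → SplitSpace k → ℂ)
    (u v : SplitSpace k → ℂ) (w : SplitSpace k) (ν : ℝ) : ℂ :=
  ∫ η : SplitSpace k, partialPairing a u v w ν η

theorem integrable_partialPairing_comp {Z : Type*} [TopologicalSpace Z] [T2Space Z]
    [SecondCountableTopology Z] [MeasurableSpace Z] [OpensMeasurableSpace Z] {μ : Measure Z}
    [SFinite μ] [IsFiniteMeasureOnCompacts μ]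
    (hP : Continuous fun q : (SplitSpace k × ℝ) × SplitSpace k =>
      partialPairing a u v q.1.1 q.1.2 q.2)
    (hD : Integrable D) (hPD : ∀ w ν η, ‖partialPairing a u v w ν η‖ ≤ D η)
    {φ : Z → SplitSpace k × ℝ} (hφ : Continuous φ) {S : Set Z} (hS : IsCompact S)
    (hφS : ∀ z, (φ z).1 ∈ tsupport v → (φ z).2 ∈ Prod.snd '' tsupport u → z ∈ S) :
    Integrable (fun q : Z × SplitSpace k => partialPairing a u v (φ q.1).1 (φ q.1).2 q.2)
      (μ.prod volume) := by
  refine integrable_prod_of_norm_le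
    (hP.comp (f := fun q : Z × SplitSpace k => (φ q.1, q.2)) (by fun_prop)).aestronglyMeasurable
    hD (fun z η => hPD _ _ η) hS.measurableSet hS.measure_lt_top.ne fun z hz η => ?_
  by_cases hv : (φ z).1 ∈ tsupport v
  · exact partialPairing_eq_zero_of_notMem_tsupport_left _ (fun hu => hz (hφS z hv hu)) η
  · exact partialPairing_eq_zero_of_notMem_tsupport_right hv _ η

theorem opAmpP_mul_conj_eq_integral_partialPairing (hH : Continuous (pairingIntegrand a u v))
    (hu : HasCompactSupport u) (w : SplitSpace k) :
    OpAmpP a u w * (starRingEnd ℂ) (v w) = (((2 * Real.pi) ^ (-((k : ℝ) + 1)) : ℝ) : ℂ) *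
      ∫ η : SplitSpace k, ∫ ν : ℝ, partialPairing a u v w ν η := by
  rw [OpAmpP, mul_assoc, ← integral_mul_const]
  congr 2 with η
  rw [← integral_mul_const]
  have hint : Integrable fun w' : SplitSpace k => pairingIntegrand a u v ((w, w'), η) :=
    (hH.comp (by fun_prop)).integrable_of_hasCompactSupport <| .intro hu.isCompact fun _ hw' =>
      pairingIntegrand_eq_zero_of_notMem_tsupport_left hw'
  exact integral_prod_symm _ hint

theorem opAmpP_mul_conj_eq_integral_fibrePairing (hH : Continuous (pairingIntegrand a u v))
    (hu : HasCompactSupport u) (hD : Integrable D)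
    (hPD : ∀ w ν η, ‖partialPairing a u v w ν η‖ ≤ D η) (w : SplitSpace k) :
    OpAmpP a u w * (starRingEnd ℂ) (v w) = (((2 * Real.pi) ^ (-((k : ℝ) + 1)) : ℝ) : ℂ) *
      ∫ ν : ℝ, fibrePairing a u v w ν := by
  have hint := integrable_partialPairing_comp (μ := (volume : Measure ℝ))
    (continuous_partialPairing hH hu) hD hPD (φ := fun ν => (w, ν)) (by fun_prop)
    (hu.isCompact.image continuous_snd) fun _ _ hν => hν
  rw [opAmpP_mul_conj_eq_integral_partialPairing hH hu]
  exact congrArg _ (integral_integral_swap (f := fun ν η => partialPairing a u v w ν η) hint).symm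

theorem integral_integral_fibrePairing (hH : Continuous (pairingIntegrand a u v))
    (hu : HasCompactSupport u) (hv : HasCompactSupport v) (hD : Integrable D)
    (hPD : ∀ w ν η, ‖partialPairing a u v w ν η‖ ≤ D η) :
    ∫ w : SplitSpace k, ∫ ν : ℝ, fibrePairing a u v w ν =
      ∫ μ : ℝ, ∫ ν : ℝ, ∫ y₀ : Fin k → ℝ, fibrePairing a u v (y₀, μ) ν := by
  have hP := continuous_partialPairing hH hu
  have hKu := hu.isCompact.image continuous_snd
  have hjoint : Integrable fun q : SplitSpace k × ℝ => fibrePairing a u v q.1 q.2 :=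
    (integrable_partialPairing_comp (μ := (volume : Measure (SplitSpace k × ℝ))) hP hD hPD
      continuous_id (hv.isCompact.prod hKu) fun _ h h' => ⟨h, h'⟩).integral_prod_left
  have hfibre : ∀ μ : ℝ,
      Integrable fun q : (Fin k → ℝ) × ℝ => fibrePairing a u v (q.1, μ) q.2 := fun μ =>
    (integrable_partialPairing_comp (μ := (volume : Measure ((Fin k → ℝ) × ℝ))) hP hD hPD
      (φ := fun q => ((q.1, μ), q.2)) (by fun_prop)
      ((hv.isCompact.image continuous_fst).prod hKu)
      fun _ h h' => ⟨⟨_, h, rfl⟩, h'⟩).integral_prod_left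
  calc _ = ∫ μ : ℝ, ∫ y₀ : Fin k → ℝ, ∫ ν : ℝ, fibrePairing a u v (y₀, μ) ν :=
        integral_prod_symm _ hjoint.integral_prod_left
    _ = _ := congrArg _ <| funext fun μ =>
        integral_integral_swap (f := fun y₀ ν => fibrePairing a u v (y₀, μ) ν) (hfibre μ)

theorem integral_pairingIntegrand_snd (y₀ y₀' η₀ : Fin k → ℝ) (μ ν : ℝ) :
    ∫ t : ℝ, pairingIntegrand a u v (((y₀, μ), (y₀', ν)), (η₀, t)) =
      (2 * Real.pi : ℝ) * (Complex.exp (Complex.I * (dotp (y₀ - y₀') η₀ : ℂ)) *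
        fibreAmplitude a μ ν y₀ y₀' η₀ * u (y₀', ν) * (starRingEnd ℂ) (v (y₀, μ))) := by
  have hfactor : ∀ t : ℝ, pairingIntegrand a u v (((y₀, μ), (y₀', ν)), (η₀, t)) =
      (Complex.exp (Complex.I * (dotp (y₀ - y₀') η₀ : ℂ)) * u (y₀', ν) *
        (starRingEnd ℂ) (v (y₀, μ))) * (a (y₀, μ) (y₀', ν) (η₀, t) *
          Complex.exp (Complex.I * (((μ - ν) * t : ℝ) : ℂ))) := by
    intro t
    simp only [pairingIntegrand, dotP, Prod.fst_sub, Prod.snd_sub]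
    push_cast
    rw [mul_add, Complex.exp_add]
    ring
  simp only [hfactor, integral_const_mul, fibreAmplitude]
  have hpi : (Real.pi : ℂ) ≠ 0 := by exact_mod_cast Real.pi_ne_zero
  push_cast
  field_simp

theorem VanishesOutsideCone.integral_integral_pairingIntegrand {c : ℝ}
    (ha : VanishesOutsideCone c a) (hH : Continuous (pairingIntegrand a u v))
    (hu : HasCompactSupport u) (w : SplitSpace k) (ν : ℝ) (η₀ : Fin k → ℝ) :
    ∫ y' : Fin k → ℝ, ∫ t : ℝ, pairingIntegrand a u v ((w, (y', ν)), (η₀, t)) =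
      ∫ t : ℝ, partialPairing a u v w ν (η₀, t) := by
  refine integral_integral_swap (f := fun (y' : Fin k → ℝ) (t : ℝ) =>
    pairingIntegrand a u v ((w, (y', ν)), (η₀, t))) ?_
  refine (hH.comp (f := fun q : (Fin k → ℝ) × ℝ => ((w, (q.1, ν)), (η₀, q.2)))
    (by fun_prop)).integrable_of_hasCompactSupport <| .intro ((hu.isCompact.image
      continuous_fst).prod (isCompact_closedBall 0 (c * Real.sqrt (∑ i, η₀ i ^ 2)))) ?_
  rintro ⟨y', t⟩ hq
  by_cases hy' : y' ∈ Prod.fst '' tsupport u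
  · have ht : c * Real.sqrt (∑ i, η₀ i ^ 2) ≤ |t| := by
      by_contra! ht
      exact hq ⟨hy', by simpa using ht.le⟩
    simp [pairingIntegrand, ha w (y', ν) η₀ t ht]
  · exact pairingIntegrand_eq_zero_of_notMem_tsupport_left fun h => hy' ⟨_, h, rfl⟩

theorem VanishesOutsideCone.opAmp_fibreAmplitude_mul_conj_eq {c : ℝ}
    (ha : VanishesOutsideCone c a) (hH : Continuous (pairingIntegrand a u v))
    (hu : HasCompactSupport u) (hD : Integrable D)
    (hPD : ∀ w ν η, ‖partialPairing a u v w ν η‖ ≤ D η) (μ ν : ℝ) (y₀ : Fin k → ℝ) :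
    OpAmp (fibreAmplitude a μ ν) (fun y₀' => u (y₀', ν)) y₀ * (starRingEnd ℂ) (v (y₀, μ)) =
      (((2 * Real.pi) ^ (-((k : ℝ) + 1)) : ℝ) : ℂ) * fibrePairing a u v (y₀, μ) ν := by
  have hint : Integrable (partialPairing a u v (y₀, μ) ν) :=
    hD.mono' ((continuous_partialPairing hH hu).comp
      (f := fun η : SplitSpace k => (((y₀, μ), ν), η)) (by fun_prop)).aestronglyMeasurable
      (.of_forall fun η => hPD _ _ η)
  have hfubini : fibrePairing a u v (y₀, μ) ν = (2 * Real.pi : ℝ) *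
      ∫ η₀ : Fin k → ℝ, ∫ y₀' : Fin k → ℝ, Complex.exp (Complex.I * (dotp (y₀ - y₀') η₀ : ℂ)) *
        fibreAmplitude a μ ν y₀ y₀' η₀ * u (y₀', ν) * (starRingEnd ℂ) (v (y₀, μ)) := by
    simp only [← integral_const_mul, ← integral_pairingIntegrand_snd]
    rw [fibrePairing, funext (ha.integral_integral_pairingIntegrand hH hu (y₀, μ) ν)]
    exact integral_prod _ hint
  have hconst : (2 * Real.pi) ^ (-(k : ℝ)) = (2 * Real.pi) ^ (-((k : ℝ) + 1)) * (2 * Real.pi) := by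
    rw [neg_add, Real.rpow_add (by positivity), Real.rpow_neg_one,
      inv_mul_cancel_right₀ (by positivity)]
  rw [OpAmp, hfubini, ← mul_assoc, ← Complex.ofReal_mul, ← hconst, mul_assoc]
  simp only [← integral_mul_const]

theorem integral_opAmpP_mul_conj_eq {Y : Set (SplitSpace k)} {c m ρ δ : ℝ} (hδ : δ < 1)
    (hc : 0 ≤ c) (ha : VanishesOutsideCone c a) (hY : IsOpen Y) (hamp : IsAmplitudeP Y m ρ δ a)
    (hu : IsTestFunctionOn Y u) (hv : IsTestFunctionOn Y v) :
    ∫ w : SplitSpace k, OpAmpP a u w * (starRingEnd ℂ) (v w) =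
      ∫ μ : ℝ, ∫ ν : ℝ, ∫ y₀ : Fin k → ℝ,
        OpAmp (fibreAmplitude a μ ν) (fun y₀' => u (y₀', ν)) y₀ * (starRingEnd ℂ) (v (y₀, μ)) := by
  have hH := continuous_pairingIntegrand hY hamp.1 hu hv
  obtain ⟨D, hD, hPD⟩ := exists_integrable_norm_partialPairing_le hδ hc ha hY hamp hu hv
  simp only [opAmpP_mul_conj_eq_integral_fibrePairing hH hu.hasCompactSupport hD hPD,
    ha.opAmp_fibreAmplitude_mul_conj_eq hH hu.hasCompactSupport hD hPD, integral_const_mul]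
  rw [integral_integral_fibrePairing hH hu.hasCompactSupport hv.hasCompactSupport hD hPD]

end FibrePairing

theorem statement19_general {k : ℕ} {m ρ δ : ℝ} (hδ : δ < 1) {Sig : Set (Fin k → ℝ)}
    (hSig : IsOpen Sig) {Λ : Set ℝ} (hΛ : IsOpen Λ)
    {a : SplitSpace k → SplitSpace k → SplitSpace k → ℂ} (hamp : IsAmplitudeP (Sig ×ˢ Λ) m ρ δ a)
    {ε : ℝ} (hε : 0 < ε) (hvanish : ∀ y y' η, (1 - ε) * eNormP η ≤ |η.2| → a y y' η = 0) :
    (∃ c, VanishesOutsideCone c a) ∧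
    (∀ μ ∈ Λ, ∀ ν ∈ Λ, IsAmplitude Sig (m + 1) ρ δ (fibreAmplitude a μ ν)) ∧
    (∀ (α β β' : Fin k → ℕ) (K : Set (Fin k → ℝ)), IsCompact K → K ⊆ Sig →
      ∀ L : Set ℝ, IsCompact L → L ⊆ Λ → ∃ C : ℝ,
        ∀ μ ∈ L, ∀ ν ∈ L, ∀ y₀ ∈ K, ∀ y₀' ∈ K, ∀ η₀ : Fin k → ℝ,
          ‖mpderiv β (fun w => mpderiv β' (fun w' =>
              mpderiv α (fibreAmplitude a μ ν w w') η₀) y₀') y₀‖ ≤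
            C * (1 + ‖η₀‖) ^ (m + 1 - ρ * mOrder α + δ * (mOrder β + mOrder β'))) ∧
    (∀ (α β β' : Fin k → ℕ) (K : Set (Fin k → ℝ)), IsCompact K → K ⊆ Sig →
      ∀ R : ℝ, ∀ μ ∈ Λ, ∀ ν ∈ Λ, ∀ e : ℝ, 0 < e → ∃ r : ℝ, 0 < r ∧
        ∀ μ' ∈ Λ, ∀ ν' ∈ Λ, |μ' - μ| < r → |ν' - ν| < r →
          ∀ y₀ ∈ K, ∀ y₀' ∈ K, ∀ η₀ : Fin k → ℝ, ‖η₀‖ ≤ R →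
            ‖mpderiv β (fun w => mpderiv β' (fun w' =>
                mpderiv α (fibreAmplitude a μ' ν' w w') η₀) y₀') y₀ -
              mpderiv β (fun w => mpderiv β' (fun w' =>
                mpderiv α (fibreAmplitude a μ ν w w') η₀) y₀') y₀‖ ≤ e) ∧
    ∀ u v : SplitSpace k → ℂ, IsTestFunctionOn (Sig ×ˢ Λ) u → IsTestFunctionOn (Sig ×ˢ Λ) v →
      ∫ w, OpAmpP a u w * (starRingEnd ℂ) (v w) =
        ∫ μ, ∫ ν, ∫ y₀, OpAmp (fibreAmplitude a μ ν) (fun y₀' => u (y₀', ν)) y₀ *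
          (starRingEnd ℂ) (v (y₀, μ)) := by
  obtain ⟨c, hc, ha⟩ := exists_vanishesOutsideCone hε hvanish
  refine ⟨⟨c, ha⟩, fun μ hμ ν hν => isAmplitude_fibreAmplitude hSig hΛ hamp hc ha hμ hν,
    fun α β β' K hK hKSig L hL hLΛ => ?_, fun α β β' K hK hKSig R μ hμ ν hν e he => ?_,
    fun u v hu hv => integral_opAmpP_mul_conj_eq hδ hc ha (hSig.prod hΛ) hamp hu hv⟩
  · exact exists_norm_nestedDirDeriv_fibreAmplitude_le hSig hΛ hamp hc ha α β β' hK hKSig hL hLΛ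
  · exact exists_norm_nestedDirDeriv_fibreAmplitude_sub_le hSig hΛ hamp.1 ha
      (coordDirs β) (coordDirs β') (coordDirs α) hK hKSig R hμ hν he

/-- Theorem 5.2 / `RH1`: if the amplitude `ã ∈ S^m_{ρ,δ,δ}(Y×Y×ℝ^d)`
on the cylinder `Y = Σ×Λ` vanishes for `|η_d| ≥ (1-ε)|η|`, then the fibre amplitudes
`ã^♮(y₀,y₀',η₀;y_d,y_d') = (2π)⁻¹ ∫ ã e^{i(y_d-y_d')η_d} dη_d` are well defined, lie in
`S^{m+1}_{ρ,δ,δ}(Σ×Σ×ℝ^{d-1})` uniformly on compacts of `Λ×Λ`, depend continuously on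
`(y_d,y_d')`, and give the kernel of `Ã` in the direct integral over `Λ`. -/
theorem statement19 {k : ℕ} (m ρ δ : ℝ) (hρ : 0 < ρ) (hδ : δ < 1)
    (Sig : Set (Fin k → ℝ)) (hSig : IsOpen Sig)
    (Λ : Set ℝ) (hΛ : IsOpen Λ) (hΛint : Λ.OrdConnected)
    (ta : ((Fin k → ℝ) × ℝ) → ((Fin k → ℝ) × ℝ) → ((Fin k → ℝ) × ℝ) → ℂ)
    (hta : IsAmplitudeP (Sig ×ˢ Λ) m ρ δ ta)
    (ε : ℝ) (hε : 0 < ε)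
    (hvanish : ∀ y y' : (Fin k → ℝ) × ℝ, ∀ η : (Fin k → ℝ) × ℝ,
      (1 - ε) * eNormP η ≤ |η.2| → ta y y' η = 0)
    (ana : (Fin k → ℝ) → (Fin k → ℝ) → (Fin k → ℝ) → ℝ → ℝ → ℂ)
    (hana : ∀ (y₀ y₀' η₀ : Fin k → ℝ) (μ ν : ℝ),
      ana y₀ y₀' η₀ μ ν = (((2 * Real.pi)⁻¹ : ℝ) : ℂ) *
        ∫ ηd : ℝ, ta (y₀, μ) (y₀', ν) (η₀, ηd) *
          Complex.exp (Complex.I * (((μ - ν) * ηd : ℝ) : ℂ))) :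
    -- (i) the `η_d`-integrand vanishes for `|η_d| ≥ c(ε)|η₀|`
    (∃ c : ℝ, ∀ y y' : (Fin k → ℝ) × ℝ, ∀ η₀ : Fin k → ℝ, ∀ ηd : ℝ,
      c * Real.sqrt (∑ i, η₀ i ^ 2) ≤ |ηd| → ta y y' (η₀, ηd) = 0) ∧
    -- (ii) each fibre `ã^♮(⋅,⋅,⋅;y_d,y_d')` lies in `S^{m+1}_{ρ,δ,δ}(Σ×Σ×ℝ^{d-1})` …
    (∀ μ ∈ Λ, ∀ ν ∈ Λ,
      IsAmplitude Sig (m + 1) ρ δ (fun y₀ y₀' η₀ => ana y₀ y₀' η₀ μ ν)) ∧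
    -- … with seminorms bounded uniformly on compact subsets of `Λ×Λ`
    (∀ (α β β' : Fin k → ℕ) (K₀ : Set (Fin k → ℝ)), IsCompact K₀ → K₀ ⊆ Sig →
      ∀ L : Set ℝ, IsCompact L → L ⊆ Λ → ∃ C : ℝ,
        ∀ μ ∈ L, ∀ ν ∈ L, ∀ y₀ ∈ K₀, ∀ y₀' ∈ K₀, ∀ η₀ : Fin k → ℝ,
          ‖mpderiv β (fun w => mpderiv β'
              (fun w' => mpderiv α (fun e => ana w w' e μ ν) η₀) y₀') y₀‖ ≤
            C * (1 + ‖η₀‖) ^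
              (m + 1 - ρ * (mOrder α : ℝ) + δ * ((mOrder β : ℝ) + (mOrder β' : ℝ)))) ∧
    -- (iii) every derivative of `ã^♮` is continuous in `(y_d,y_d')`, uniformly for
    -- `y₀, y₀'` in compacts of `Σ` and `|η₀| ≤ R₀`
    (∀ (α β β' : Fin k → ℕ) (K₀ : Set (Fin k → ℝ)), IsCompact K₀ → K₀ ⊆ Sig →
      ∀ R₀ : ℝ, 0 < R₀ → ∀ μ ∈ Λ, ∀ ν ∈ Λ, ∀ e : ℝ, 0 < e → ∃ δ' : ℝ, 0 < δ' ∧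
        ∀ μ' ∈ Λ, ∀ ν' ∈ Λ, |μ' - μ| < δ' → |ν' - ν| < δ' →
          ∀ y₀ ∈ K₀, ∀ y₀' ∈ K₀, ∀ η₀ : Fin k → ℝ, ‖η₀‖ ≤ R₀ →
            ‖mpderiv β (fun w => mpderiv β'
                (fun w' => mpderiv α (fun e' => ana w w' e' μ' ν') η₀) y₀') y₀ -
              mpderiv β (fun w => mpderiv β'
                (fun w' => mpderiv α (fun e' => ana w w' e' μ ν) η₀) y₀') y₀‖ ≤ e) ∧
    -- (iv) `ã^♮` is the kernel of `Ã` in the direct integral decomposition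
    (∀ u v : ((Fin k → ℝ) × ℝ) → ℂ,
      ContDiff ℝ (⊤ : ℕ∞) u → HasCompactSupport u → tsupport u ⊆ Sig ×ˢ Λ →
      ContDiff ℝ (⊤ : ℕ∞) v → HasCompactSupport v → tsupport v ⊆ Sig ×ˢ Λ →
      ∫ w : (Fin k → ℝ) × ℝ, OpAmpP ta u w * (starRingEnd ℂ) (v w) =
        ∫ μ : ℝ, ∫ ν : ℝ, ∫ y₀ : Fin k → ℝ,
          OpAmp (fun p q η₀ => ana p q η₀ μ ν) (fun y₀' => u (y₀', ν)) y₀ *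
            (starRingEnd ℂ) (v (y₀, μ))) := by
  obtain rfl : ana = fun y₀ y₀' η₀ μ ν => fibreAmplitude ta μ ν y₀ y₀' η₀ :=
    funext fun y₀ => funext fun y₀' => funext fun η₀ => funext₂ (hana y₀ y₀' η₀)
  obtain ⟨hcone, hfibre, hunif, hcont, hkernel⟩ :=
    statement19_general hδ hSig hΛ hta hε hvanish
  exact ⟨hcone, hfibre, hunif,
    fun α β β' K₀ hK₀ hK₀Sig R₀ _ => hcont α β β' K₀ hK₀ hK₀Sig R₀,
    fun u v hu huc hus hv hvc hvs => hkernel u v ⟨hu, huc, hus⟩ ⟨hv, hvc, hvs⟩⟩
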